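/- arXiv:1103.0901 — 2 statements merged into one kernel-verified Lean document; each statement's English description precedes it below -/
import Mathlib

section
/- (Bottleneck lemma) Let N ∈ ℕ and let σ ∈ {0,1}^{ℤ²} be a configuration for which the maximal number of pairwise disjoint infinite self-avoiding 1*paths equals N (i.e., there exist N pairwise disjoint infinite self-avoiding 1*paths but not N+1). Then for every finite set Γ ⊂ ℤ² there exists a necklet with N 1pearls around Γ with respect to σ. -/
/-!
Enlarge `Γ` to a square `B` which also contains the starting points of `N` disjoint infinite
`1*`paths. Any circuit around `B` meets each of them (`exists_mem_circuit`), so it contains at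
least `N` sites of spin `1`. It remains to find a circuit around `B` with at most `N`.

Since there are no `N + 1` disjoint rays, a Menger-type theorem (`menger_ray`), obtained from
Hall's marriage theorem for infinite families of finite sets, provides a finite `D ⊇ B` such that
at most `N` sites of the `*`boundary of `D` have spin `1` (`exists_separator`). Hall's theorem
replaces both the finite Menger theorem and the compactness argument: an injective partial map
that moves each vertex to a neighbour or fixes it has orbits that are the desired rays.

The `*`boundary of a finite set contains a circuit around each of its points
(`exists_circuit_starBoundary`). This rests on discrete cohomology: the winding number around `w`
is the number of signed crossings with a half-line from `w` (`windingAround_eq_cutNumber`), and if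
it vanished on all circuits of the `*`boundary, the crossing form would be exact there and could be
modified near `D` to be closed on the whole plane, although its sum around a large square is not
zero. The winding number is unchanged along `*`steps off the circuit (`cutNumber_adjStar`), so the
circuit surrounds all of `B` as soon as it surrounds one corner.
-/


open MeasureTheory ProbabilityTheory
open scoped ENNReal

namespace Percolation

/-- Sites of the square lattice. -/
abbrev Site : Type := ℤ × ℤ

/-- Configurations: spins `0`/`1` encoded as `false`/`true`. -/
abbrev Config : Type := Site → Bool

/-- Nearest-neighbour adjacency: Euclidean distance `1`. -/
def adj (x y : Site) : Prop :=
  (x.1 - y.1) ^ 2 + (x.2 - y.2) ^ 2 = 1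

/-- `*`adjacency: Euclidean distance `1` or `√2`. -/
def adjStar (x y : Site) : Prop :=
  x ≠ y ∧ |x.1 - y.1| ≤ 1 ∧ |x.2 - y.2| ≤ 1

/-- `x` and `y` are joined inside `G` by a path whose consecutive sites satisfy `R`. -/
def JoinedIn (R : Site → Site → Prop) (G : Set Site) (x y : Site) : Prop :=
  ∃ P : List Site, P.Chain' R ∧ (∀ z ∈ P, z ∈ G) ∧ P.head? = some x ∧ P.getLast? = some y

/-- `S` is a `0`cluster of `σ`: a maximal `adj`-connected subset of `σ⁻¹(0)`. -/
def IsCluster0 (σ : Config) (S : Set Site) : Prop :=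
  S.Nonempty ∧ (∀ z ∈ S, σ z = false) ∧
    (∀ x ∈ S, ∀ y ∈ S, JoinedIn adj S x y) ∧
    (∀ x ∈ S, ∀ y : Site, adj x y → σ y = false → y ∈ S)

/-- `S` is a `1*`cluster of `σ`: a maximal `adjStar`-connected subset of `σ⁻¹(1)`. -/
def IsCluster1 (σ : Config) (S : Set Site) : Prop :=
  S.Nonempty ∧ (∀ z ∈ S, σ z = true) ∧
    (∀ x ∈ S, ∀ y ∈ S, JoinedIn adjStar S x y) ∧
    (∀ x ∈ S, ∀ y : Site, adjStar x y → σ y = true → y ∈ S)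

/-- `x` belongs to an infinite `1*`cluster of `σ`. -/
def InInfinite1 (σ : Config) (x : Site) : Prop :=
  ∃ S : Set Site, IsCluster1 σ S ∧ S.Infinite ∧ x ∈ S

/-- There is exactly one infinite `0`cluster. -/
def UniqueInfinite0 (σ : Config) : Prop :=
  ∃! S : Set Site, IsCluster0 σ S ∧ S.Infinite

/-- There is exactly one infinite `1*`cluster. -/
def UniqueInfinite1 (σ : Config) : Prop :=
  ∃! S : Set Site, IsCluster1 σ S ∧ S.Infinite

/-- There is at most one infinite `1*`cluster. -/
def AtMostOneInfinite1 (σ : Config) : Prop :=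
  ∀ S T : Set Site, IsCluster1 σ S → S.Infinite → IsCluster1 σ T → T.Infinite → S = T

/-- An infinite `1*`cluster exists. -/
def ExistsInfinite1 (σ : Config) : Prop := ∃ S : Set Site, IsCluster1 σ S ∧ S.Infinite

/-- An infinite `0`cluster exists. -/
def ExistsInfinite0 (σ : Config) : Prop := ∃ S : Set Site, IsCluster0 σ S ∧ S.Infinite

/-- An increasing event. -/
def IncreasingEvent (A : Set Config) : Prop :=
  ∀ ⦃ξ η : Config⦄, ξ ∈ A → ξ ≤ η → η ∈ A

/-- Positive association: increasing events are positively correlated. -/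
def PositivelyAssociated (μ : Measure Config) : Prop :=
  ∀ A B : Set Config, MeasurableSet A → MeasurableSet B →
    IncreasingEvent A → IncreasingEvent B → μ A * μ B ≤ μ (A ∩ B)

/-- The cylinder event "`η` on `Δ`". -/
def cylEvent (Δ : Finset Site) (η : Site → Bool) : Set Config :=
  {σ | ∀ z ∈ Δ, σ z = η z}

/-- The σ-algebra generated by the spins outside `Δ`. -/
def outsideAlgebra (Δ : Finset Site) : MeasurableSpace Config :=
  MeasurableSpace.comap (fun σ (z : {z : Site // z ∉ Δ}) => σ z.1) inferInstance

/-- The bounded energy condition: `μ(η on Δ | ξ off Δ) ≥ c_{|Δ|}` for a.e. `ξ`, expressed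
via integrated conditional probabilities against events of the outside σ-algebra. -/
def BoundedEnergy (μ : Measure Config) : Prop :=
  ∀ n : ℕ, ∃ c : ℝ≥0∞, 0 < c ∧
    ∀ Δ : Finset Site, Δ.card = n → ∀ η : Site → Bool,
      ∀ B : Set Config, MeasurableSet[outsideAlgebra Δ] B →
        c * μ B ≤ μ (cylEvent Δ η ∩ B)

/-- The finite energy condition: `μ(η on Δ | ξ off Δ) > 0` for a.e. `ξ`, expressed
via integrated conditional probabilities against events of the outside σ-algebra. -/
def FiniteEnergy (μ : Measure Config) : Prop :=
  ∀ (Δ : Finset Site) (η : Site → Bool) (B : Set Config),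
    MeasurableSet[outsideAlgebra Δ] B → 0 < μ B → 0 < μ (cylEvent Δ η ∩ B)

/-- The tail σ-algebra. -/
def tailAlgebra : MeasurableSpace Config :=
  ⨅ Δ : Finset Site, outsideAlgebra Δ

/-- Translation of configurations by `v`. -/
def shift (v : Site) (σ : Config) : Config := fun z => σ (z + v)

/-- A site viewed as a complex number. -/
noncomputable def toC (z : Site) : ℂ := (z.1 : ℂ) + (z.2 : ℂ) * Complex.I

/-- Winding number around the origin of the polygonal curve through the sites of `P`. -/
noncomputable def winding (P : List Site) : ℝ :=
  (1 / (2 * Real.pi)) *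
    ((P.zip P.tail).map fun p => Complex.arg (toC p.2 / toC p.1)).sum

/-- Winding number of `P` around the site `w`. -/
noncomputable def windingAround (P : List Site) (w : Site) : ℝ :=
  winding (P.map fun z => z - w)

/-- The site `w` lies in the interior of the circuit `C`, i.e. is enclosed by `C`. -/
def circuitEncloses (C : List Site) (w : Site) : Prop :=
  w ∉ C ∧ windingAround (C ++ C.take 1) w ≠ 0

/-- A circuit: a path whose starting site is adjacent to its ending site. -/
def IsCircuit (C : List Site) : Prop :=
  C.Chain' adj ∧ ∃ h : C ≠ [], adj (C.getLast h) (C.head h)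

/-- A `*`circuit: a `*`path whose starting site is `*`adjacent to its ending site. -/
def IsStarCircuit (C : List Site) : Prop :=
  C.Chain' adjStar ∧ ∃ h : C ≠ [], adjStar (C.getLast h) (C.head h)

/-- A (finite) `1*`path with respect to `σ`. -/
def Is1StarPath (σ : Config) (P : List Site) : Prop :=
  P ≠ [] ∧ P.Chain' adjStar ∧ ∀ z ∈ P, σ z = true

/-- A (finite) `0`path with respect to `σ`. -/
def Is0Path (σ : Config) (P : List Site) : Prop :=
  P ≠ [] ∧ P.Chain' adj ∧ ∀ z ∈ P, σ z = false

/-- A `1*`circuit with respect to `σ`. -/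
def Is1StarCircuit (σ : Config) (C : List Site) : Prop :=
  IsStarCircuit C ∧ ∀ z ∈ C, σ z = true

/-- A `0`circuit with respect to `σ`. -/
def Is0Circuit (σ : Config) (C : List Site) : Prop :=
  IsCircuit C ∧ ∀ z ∈ C, σ z = false

/-- `C` is a circuit around `Δ`: every site of `Δ` is enclosed by `C`. -/
def CircuitAround (C : List Site) (Δ : Set Site) : Prop :=
  ∀ z ∈ Δ, circuitEncloses C z

/-- A mixed circuit with respect to `σ`: a self-avoiding `*`circuit consisting of a
self-avoiding `1*`path followed by a self-avoiding `0`path (either part may be empty). -/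
def IsMixedCircuit (σ : Config) (C : List Site) : Prop :=
  ∃ P Q : List Site, C = P ++ Q ∧ C.Nodup ∧
    P.Chain' adjStar ∧ Q.Chain' adj ∧
    (∀ z ∈ P, σ z = true) ∧ (∀ z ∈ Q, σ z = false) ∧ IsStarCircuit C

/-- `z` lies in the exterior of the circuit `C`. -/
def InExterior (C : List Site) (z : Site) : Prop :=
  z ∉ C ∧ ¬ circuitEncloses C z

/-- An infinite self-avoiding `1*`path with respect to `σ`. -/
def IsInfSA1StarPath (σ : Config) (f : ℕ → Site) : Prop :=
  Function.Injective f ∧ (∀ i, adjStar (f i) (f (i + 1))) ∧ ∀ i, σ (f i) = true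

/-- An infinite self-avoiding `0`path with respect to `σ`. -/
def IsInfSA0Path (σ : Config) (f : ℕ → Site) : Prop :=
  Function.Injective f ∧ (∀ i, adj (f i) (f (i + 1))) ∧ ∀ i, σ (f i) = false

/-- There exist `n` pairwise disjoint infinite self-avoiding `1*`paths. -/
def HasNDisjoint1 (σ : Config) (n : ℕ) : Prop :=
  ∃ f : Fin n → ℕ → Site, (∀ i, IsInfSA1StarPath σ (f i)) ∧
    ∀ i j, i ≠ j → Disjoint (Set.range (f i)) (Set.range (f j))

/-- A two-sided infinite self-avoiding `1*`path with respect to `σ`. -/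
def IsTwoSidedInf1 (σ : Config) (f : ℤ → Site) : Prop :=
  Function.Injective f ∧ (∀ i : ℤ, adjStar (f i) (f (i + 1))) ∧ ∀ i : ℤ, σ (f i) = true

/-- A `1*`path of `σ` from `x` to `y` avoiding `Δ`. -/
def starPathBetweenAvoiding (σ : Config) (Δ : Set Site) (x y : Site) (P : List Site) : Prop :=
  Is1StarPath σ P ∧ P.head? = some x ∧ P.getLast? = some y ∧ ∀ z ∈ P, z ∉ Δ

/-- `x` is on the left side of `Γ`. -/
def OnLeftSide (x : Site) (Γ : Set Site) : Prop :=
  ∃ d : ℕ, 0 < d ∧ (∀ z ∈ Γ, |z.1| ≤ (d : ℤ) ∧ |z.2| ≤ (d : ℤ)) ∧ x.1 ≤ -(d : ℤ)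

/-- `x` is on the right side of `Γ`. -/
def OnRightSide (x : Site) (Γ : Set Site) : Prop :=
  ∃ d : ℕ, 0 < d ∧ (∀ z ∈ Γ, |z.1| ≤ (d : ℤ) ∧ |z.2| ≤ (d : ℤ)) ∧ (d : ℤ) ≤ x.1

/-- The square `{-n, …, n}²`. -/
def square (n : ℕ) : Set Site := {z : Site | |z.1| ≤ (n : ℤ) ∧ |z.2| ≤ (n : ℤ)}

/-- The `*`boundary `∂*B` of a set of sites. -/
def starBoundary (B : Set Site) : Set Site :=
  {x | x ∉ B ∧ ∃ y ∈ B, adjStar x y}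

/-- The union of all infinite `1*`clusters of `σ`. -/
def InfinitePart1 (σ : Config) : Set Site := {z | InInfinite1 σ z}

/-- The filled infinite `1*`cluster `S₁*`: the infinite `1*`cluster together with all
finite `0`clusters `*`encircled by it. -/
def Fill (σ : Config) : Set Site :=
  InfinitePart1 σ ∪
    {z | ∃ F : Set Site, IsCluster0 σ F ∧ F.Finite ∧ z ∈ F ∧
      ∃ C : List Site, IsStarCircuit C ∧ (∀ w ∈ C, w ∈ InfinitePart1 σ) ∧
        ∀ w ∈ F, circuitEncloses C w}

/-- The indicator of the filled infinite `1*`cluster, as a point of `{0,1}^{ℤ²}`. -/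
noncomputable def fillInd (σ : Config) : Site → Bool :=
  fun z => @decide (z ∈ Fill σ) (Classical.propDecidable _)

/-- Exactly one infinite `0`cluster and exactly one infinite `1*`cluster coexist. -/
def CoexistUnique (σ : Config) : Prop := UniqueInfinite0 σ ∧ UniqueInfinite1 σ

/-! ### A Menger theorem for rays -/

/-- Two points outside the range of an injective partial map `f` whose forward orbits meet are
equal: trace both orbits back from the meeting point. -/
theorem common_source {V : Type*} {d : ℕ} {f : V → V ⊕ Fin d} (hf : Function.Injective f)
    {a b u : V} (ha : ∀ v, f v ≠ Sum.inl a) (hb : ∀ v, f v ≠ Sum.inl b)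
    (hau : Relation.ReflTransGen (fun x y => f x = Sum.inl y) a u)
    (hbu : Relation.ReflTransGen (fun x y => f x = Sum.inl y) b u) : a = b := by
  induction hau generalizing b with
  | refl =>
    rcases Relation.ReflTransGen.cases_tail hbu with h | ⟨c, -, hc⟩
    · exact h
    · exact absurd hc (ha c)
  | tail _ hxy ih =>
    rcases Relation.ReflTransGen.cases_tail hbu with h | ⟨c, hbc, hc⟩
    · subst h
      exact absurd hxy (hb _)
    · exact ih hb (hf (hxy.trans hc.symm) ▸ hbc)

/-- Let `f` be an injective partial self-map of `V` (the summand `Fin d` marks undefined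
values) whose range avoids `A`. At most `d` points of `A` have a terminating orbit, and the orbits
of the others are injective and pairwise disjoint. -/
theorem exists_orbits {V : Type*} (A : Finset V) (d n : ℕ) (f : V → V ⊕ Fin d)
    (hf : Function.Injective f) (hA : ∀ v, ∀ a ∈ A, f v ≠ Sum.inl a) (hn : n + d ≤ A.card) :
    ∃ g : Fin n → ℕ → V, (∀ i, Function.Injective (g i)) ∧
      (∀ i k, f (g i k) = Sum.inl (g i (k + 1))) ∧
      ∀ i j, i ≠ j → ∀ k l, g i k ≠ g j l := by
  classical
  set R : V → V → Prop := fun x y => f x = Sum.inl y with hR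
  set bad : Finset V := A.filter fun a => ∃ u j, Relation.ReflTransGen R a u ∧ f u = Sum.inr j with hbad
  -- distinct starting points with terminating orbits end at distinct marks
  have hbadcard : bad.card ≤ d := by
    have key : ∀ a : bad, ∃ j : Fin d, ∃ u, Relation.ReflTransGen R a u ∧ f u = Sum.inr j := by
      rintro ⟨a, ha⟩
      obtain ⟨-, u, j, h⟩ := Finset.mem_filter.1 ha
      exact ⟨j, u, h⟩
    choose J U hJ using key
    have hinj : Function.Injective J := by
      intro a b hab
      have hu : U a = U b := hf (by rw [(hJ a).2, (hJ b).2, hab])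
      exact Subtype.ext (common_source hf
        (fun v => hA v _ (Finset.mem_filter.1 a.2).1) (fun v => hA v _ (Finset.mem_filter.1 b.2).1)
        (hJ a).1 (hu ▸ (hJ b).1))
    simpa using Fintype.card_le_of_injective J hinj
  have hgood : Fintype.card (Fin n) ≤ Fintype.card ↥(A \ bad) := by
    have := Finset.le_card_sdiff bad A
    simp only [Fintype.card_fin, Fintype.card_coe]
    omega
  obtain ⟨e⟩ := Function.Embedding.nonempty_of_card_le hgood
  set s : V → V := fun v => Sum.elim id (fun _ => v) (f v) with hs
  have hmem : ∀ i, (e i : V) ∈ A := fun i => (Finset.mem_sdiff.1 (e i).2).1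
  have hstep : ∀ i k, Relation.ReflTransGen R (e i) (s^[k] (e i)) ∧
      f (s^[k] (e i)) = Sum.inl (s^[k + 1] (e i)) := by
    intro i
    have main : ∀ u, Relation.ReflTransGen R (e i) u → f u = Sum.inl (s u) := by
      intro u hu
      rcases h : f u with w | j
      · simp [hs, h]
      · exact absurd (Finset.mem_filter.2 ⟨hmem i, u, j, hu, h⟩) (Finset.mem_sdiff.1 (e i).2).2
    intro k
    have h1 : Relation.ReflTransGen R (e i) (s^[k] (e i)) := by
      induction k with
      | zero => exact .refl
      | succ k ih =>
        rw [Function.iterate_succ_apply']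
        exact ih.tail (main _ ih)
    exact ⟨h1, by rw [Function.iterate_succ_apply']; exact main _ h1⟩
  refine ⟨fun i k => s^[k] (e i), fun i => ?_, fun i k => (hstep i k).2, ?_⟩
  · have aux : ∀ k l, s^[k] (e i : V) = s^[k + l] (e i : V) → l = 0 := by
      intro k
      induction k with
      | zero =>
        intro l h
        rcases l with _ | l
        · rfl
        · have := (hstep i l).2
          rw [Nat.zero_add] at h
          rw [← h] at this
          exact absurd this (hA _ _ (hmem i))
      | succ k ih =>
        intro l h
        refine ih l (hf ?_)
        rw [(hstep i k).2, (hstep i (k + l)).2, h, Nat.add_right_comm]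
    intro k l h
    rcases le_total k l with hkl | hkl
    · obtain ⟨r, rfl⟩ := Nat.exists_eq_add_of_le hkl
      simp [aux k r h]
    · obtain ⟨r, rfl⟩ := Nat.exists_eq_add_of_le hkl
      simp [aux l r h.symm]
  · intro i j hij k l h
    apply hij
    apply e.injective
    apply Subtype.ext
    refine common_source hf (fun v => hA v _ (hmem i)) (fun v => hA v _ (hmem j))
      (hstep i k).1 ?_
    have := (hstep j l).1
    dsimp only at h
    rwa [← h] at this

/-- Menger's theorem for rays in a locally finite digraph with out-neighbourhoods `nb`: either
`n + 1` disjoint rays start in `A`, or a finite set `S` is such that the starting points and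
out-neighbours of `S` lying outside `S` number at most `n`.

This is Hall's theorem for matching each vertex `v` with itself or an out-neighbour, never in `A`,
or with one of `|A| - (n + 1)` dummies. Such a matching is an injective partial map whose orbits
from `A` give the rays, and a finite set violating Hall's condition is the set `S`. -/
theorem menger_ray {V : Type*} [DecidableEq V] (nb : V → Finset V) (A : Finset V) (n : ℕ) :
    (∃ S : Finset V, (A \ S ∪ S.biUnion nb \ S).card ≤ n) ∨
    ∃ g : Fin (n + 1) → ℕ → V, (∀ i, Function.Injective (g i)) ∧
      (∀ i k, g i (k + 1) ∈ nb (g i k)) ∧ ∀ i j, i ≠ j → ∀ k l, g i k ≠ g j l := by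
  by_cases hAn : A.card ≤ n
  · exact .inl ⟨∅, by simpa using hAn⟩
  -- now `n + 1 ≤ A.card`, so this subtraction does not truncate
  set d := A.card - (n + 1) with hd
  set t : V → Finset (V ⊕ Fin d) := fun v => (insert v (nb v) \ A).disjSum Finset.univ with ht
  by_cases hall : ∀ s : Finset V, s.card ≤ (s.biUnion t).card
  · right
    obtain ⟨f, hf, hft⟩ := (Finset.all_card_le_biUnion_card_iff_exists_injective t).1 hall
    obtain ⟨g, h1, h2, h3⟩ := exists_orbits A d (n + 1) f hf (by
      intro v a ha h
      have := hft v
      rw [h] at this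
      simp [ht, ha] at this) (by omega)
    refine ⟨g, h1, fun i k => ?_, h3⟩
    have := hft (g i k)
    rw [h2] at this
    have hne : g i (k + 1) ≠ g i k := fun h => by simpa using h1 i h
    simp [ht, hne] at this
    exact this.1
  · left
    push Not at hall
    obtain ⟨S, hS⟩ := hall
    refine ⟨S, ?_⟩
    have hne : S.Nonempty := by
      rw [← Finset.card_pos]; omega
    have hsub : ((S ∪ S.biUnion nb) \ A).disjSum (Finset.univ : Finset (Fin d)) ⊆ S.biUnion t := by
      intro x hx
      obtain ⟨v0, hv0⟩ := hne
      rcases x with x | j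
      · simp only [Finset.inl_mem_disjSum, Finset.mem_sdiff, Finset.mem_union,
          Finset.mem_biUnion] at hx
        simp only [ht, Finset.mem_biUnion, Finset.inl_mem_disjSum, Finset.mem_sdiff,
          Finset.mem_insert]
        rcases hx with ⟨hx | ⟨v, hv, hx⟩, hxA⟩
        · exact ⟨x, hx, .inl rfl, hxA⟩
        · exact ⟨v, hv, .inr hx, hxA⟩
      · simp only [ht, Finset.mem_biUnion]
        exact ⟨v0, hv0, by simp⟩
    have h1 := Finset.card_le_card hsub
    rw [Finset.card_disjSum, Finset.card_univ, Fintype.card_fin] at h1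
    have hX : A \ S ∪ S.biUnion nb \ S = (A ∪ (S ∪ S.biUnion nb)) \ S := by
      ext x; simp; tauto
    have hE : A ∪ (S ∪ S.biUnion nb) = A ∪ ((S ∪ S.biUnion nb) \ A) := by simp
    have h2 : (A ∪ (S ∪ S.biUnion nb)).card ≤ A.card + ((S ∪ S.biUnion nb) \ A).card := by
      rw [hE]; exact Finset.card_union_le _ _
    have h3 : S ⊆ A ∪ (S ∪ S.biUnion nb) := fun x hx => by simp [hx]
    rw [hX, Finset.card_sdiff_of_subset h3]
    omega

/-! ### Winding numbers as cut numbers -/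

/-- Signed crossing of the edge from `a` to `b` with the leftward half-line emanating from `w`,
slightly below its own row: `1` for a downward step, `-1` for an upward step. The formula agrees
with this when `a` and `b` are adjacent, since a horizontal step does not change rows. -/
def cut (w a b : Site) : ℤ :=
  if a.1 < w.1 then (if b.2 < w.2 then 1 else 0) - (if a.2 < w.2 then 1 else 0) else 0

/-- Sum of `φ` over the consecutive pairs of a list. -/
def stepSum (φ : Site → Site → ℤ) : List Site → ℤ
  | a :: b :: l => φ a b + stepSum φ (b :: l)
  | _ => 0

theorem adj_iff {a b : Site} : adj a b ↔
    (b = (a.1 + 1, a.2) ∨ b = (a.1 - 1, a.2) ∨ b = (a.1, a.2 + 1) ∨ b = (a.1, a.2 - 1)) := by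
  obtain ⟨a1, a2⟩ := a
  obtain ⟨b1, b2⟩ := b
  simp only [adj, Prod.mk.injEq]
  constructor
  · intro h
    have h1 : (a1 - b1) ^ 2 ≤ 1 := by nlinarith [sq_nonneg (a2 - b2)]
    have h2 : (a2 - b2) ^ 2 ≤ 1 := by nlinarith [sq_nonneg (a1 - b1)]
    have h3 := abs_le_of_sq_le_sq' (b := (1 : ℤ)) (by simpa using h1) zero_le_one
    have h4 := abs_le_of_sq_le_sq' (b := (1 : ℤ)) (by simpa using h2) zero_le_one
    obtain ⟨u, hu⟩ : ∃ u, u = a1 - b1 := ⟨_, rfl⟩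
    obtain ⟨v, hv⟩ : ∃ v, v = a2 - b2 := ⟨_, rfl⟩
    rw [← hu, ← hv] at h
    rw [← hu] at h3
    rw [← hv] at h4
    obtain ⟨h3, h3'⟩ := h3
    obtain ⟨h4, h4'⟩ := h4
    interval_cases u <;> interval_cases v <;> simp at h <;> omega
  · rintro (⟨rfl, rfl⟩ | ⟨rfl, rfl⟩ | ⟨rfl, rfl⟩ | ⟨rfl, rfl⟩) <;> ring

theorem cut_symm {w a b : Site} (h : adj a b) : cut w b a = -cut w a b := by
  rcases adj_iff.1 h with rfl | rfl | rfl | rfl <;> simp only [cut] <;> split_ifs <;> omega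

theorem stepSum_congr {φ ψ : Site → Site → ℤ} {P : List Site} (hP : P.IsChain adj)
    (h : ∀ a ∈ P, ∀ b ∈ P, adj a b → φ a b = ψ a b) : stepSum φ P = stepSum ψ P := by
  induction P with
  | nil => rfl
  | cons a l ih =>
    cases l with
    | nil => rfl
    | cons b l =>
      rw [List.isChain_cons_cons] at hP
      simp only [stepSum]
      rw [h a (by simp) b (by simp) hP.1, ih hP.2 fun x hx y hy =>
        h x (List.mem_cons_of_mem _ hx) y (List.mem_cons_of_mem _ hy)]

theorem stepSum_sub (φ ψ : Site → Site → ℤ) (P : List Site) :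
    stepSum (fun a b => φ a b - ψ a b) P = stepSum φ P - stepSum ψ P := by
  induction P with
  | nil => rfl
  | cons a l ih =>
    cases l with
    | nil => rfl
    | cons b l => simp only [stepSum, ih]; ring

theorem stepSum_grad (g : Site → ℤ) (a : Site) (l : List Site) :
    stepSum (fun a b => g b - g a) (a :: l) = g ((a :: l).getLast (by simp)) - g a := by
  induction l generalizing a with
  | nil => simp [stepSum]
  | cons b l ih => simp only [stepSum, ih]; simp

theorem IsCircuit.closed {C : List Site} (hC : IsCircuit C) :
    ∃ a l, C = a :: l ∧ C ++ C.take 1 = a :: (l ++ [a]) ∧ (a :: (l ++ [a])).IsChain adj ∧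
      ∀ x ∈ a :: (l ++ [a]), x ∈ a :: l := by
  obtain ⟨h1, h2, h3⟩ := hC
  obtain ⟨a, l, rfl⟩ := List.exists_cons_of_ne_nil h2
  refine ⟨a, l, rfl, by simp, ?_, by simp +contextual [or_imp]⟩
  rw [← List.cons_append, List.isChain_append]
  refine ⟨h1, by simp, ?_⟩
  intro x hx y hy
  rw [List.getLast?_eq_getLast_of_ne_nil h2] at hx
  simp at hx hy
  subst hx hy
  simpa using h3

/-- Total signed crossing number of the closed walk `C` with the half-line of `cut w`. -/
def cutNumber (C : List Site) (w : Site) : ℤ := stepSum (cut w) (C ++ C.take 1)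

theorem cutNumber_eq_of_grad {C : List Site} (hC : IsCircuit C) {w w' : Site} (g : Site → ℤ)
    (h : ∀ a ∈ C, ∀ b ∈ C, adj a b → cut w a b - cut w' a b = g b - g a) :
    cutNumber C w = cutNumber C w' := by
  obtain ⟨a, l, rfl, hE, hch, hm⟩ := hC.closed
  have h0 := stepSum_sub (cut w) (cut w') (a :: (l ++ [a]))
  rw [stepSum_congr (ψ := fun a b => g b - g a) hch
    (fun x hx y hy => h x (hm x hx) y (hm y hy)), stepSum_grad] at h0
  simp at h0
  rw [cutNumber, cutNumber, hE]
  omega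

/-- A circuit has cut number zero around any site outside a rectangle containing it. -/
theorem cutNumber_far {C : List Site} (hC : IsCircuit C) {w : Site}
    (h : (∀ a ∈ C, w.1 < a.1) ∨ (∀ a ∈ C, a.1 < w.1) ∨ (∀ a ∈ C, w.2 < a.2) ∨
      (∀ a ∈ C, a.2 < w.2)) : cutNumber C w = 0 := by
  obtain ⟨a, l, rfl, hE, hch, hm⟩ := hC.closed
  have : ∃ g : Site → ℤ, ∀ x ∈ a :: l, ∀ y ∈ a :: l, cut w x y = g y - g x := by
    rcases h with h | h | h | h
    · refine ⟨fun _ => 0, fun x hx y hy => ?_⟩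
      have := h x hx
      simp only [cut]; split_ifs <;> omega
    · refine ⟨fun x => if x.2 < w.2 then 1 else 0, fun x hx y hy => ?_⟩
      simp only [cut, if_pos (h x hx)]
    · refine ⟨fun _ => 0, fun x hx y hy => ?_⟩
      have := h x hx
      have := h y hy
      simp only [cut]; split_ifs <;> omega
    · refine ⟨fun _ => 0, fun x hx y hy => ?_⟩
      have := h x hx
      have := h y hy
      simp only [cut]; split_ifs <;> omega
  obtain ⟨g, hg⟩ := this
  rw [cutNumber, hE, stepSum_congr (ψ := fun a b => g b - g a) hch
    (fun x hx y hy _ => hg x (hm x hx) y (hm y hy)), stepSum_grad]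
  simp

/-- Moving the cut one row down changes it by a gradient, away from the two end points: what
enters the row of `w'` to the left of `w'` through the old cut leaves it through the new one. -/
theorem cut_grad_down {w w' : Site} (h2 : w'.2 = w.2 - 1)
    (h1 : w'.1 = w.1 - 1 ∨ w'.1 = w.1 ∨ w'.1 = w.1 + 1) :
    ∃ g : Site → ℤ, ∀ a b, adj a b → a ≠ w → b ≠ w → a ≠ w' → b ≠ w' →
      cut w a b - cut w' a b = g b - g a := by
  refine ⟨fun x => if x.2 = w'.2 ∧ x.1 < w'.1 then 1 else 0, ?_⟩
  obtain ⟨w1, w2⟩ := w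
  obtain ⟨w1', w2'⟩ := w'
  rintro ⟨a1, a2⟩ b hab h3 h4 h5 h6
  simp only at h1 h2
  subst h2
  rcases adj_iff.1 hab with rfl | rfl | rfl | rfl <;>
    simp only [cut, ne_eq, Prod.mk.injEq, not_and] at * <;> 
    rcases h1 with rfl | rfl | rfl <;> split_ifs <;> omega

theorem cut_grad_horiz {w w' : Site} (h2 : w'.2 = w.2) (h1 : w'.1 = w.1 + 1) :
    ∀ a b, adj a b → a ≠ w → b ≠ w → cut w a b = cut w' a b := by
  obtain ⟨w1, w2⟩ := w
  obtain ⟨w1', w2'⟩ := w'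
  rintro ⟨a1, a2⟩ b hab h3 h4
  simp only at h1 h2
  subst h2 h1
  rcases adj_iff.1 hab with rfl | rfl | rfl | rfl <;>
    simp only [cut, ne_eq, Prod.mk.injEq, not_and] at * <;> split_ifs <;> omega

/-- The cut number does not change along a `*`step that avoids the circuit. -/
theorem cutNumber_adjStar {C : List Site} (hC : IsCircuit C) {w w' : Site} (hw : w ∉ C)
    (hw' : w' ∉ C) (h : adjStar w w') : cutNumber C w = cutNumber C w' := by
  have ne : ∀ {a v : Site}, a ∈ C → v ∉ C → a ≠ v := fun ha hv h => hv (h ▸ ha)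
  have down : ∀ u v : Site, u ∉ C → v ∉ C → v.2 = u.2 - 1 →
      (v.1 = u.1 - 1 ∨ v.1 = u.1 ∨ v.1 = u.1 + 1) → cutNumber C u = cutNumber C v := by
    intro u v hu hv h2 h1
    obtain ⟨g, hg⟩ := cut_grad_down h2 h1
    exact cutNumber_eq_of_grad hC g fun a ha b hb hab =>
      hg a b hab (ne ha hu) (ne hb hu) (ne ha hv) (ne hb hv)
  have right : ∀ u v : Site, u ∉ C → v.2 = u.2 → v.1 = u.1 + 1 →
      cutNumber C u = cutNumber C v := by
    intro u v hu h2 h1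
    refine cutNumber_eq_of_grad hC (fun _ => 0) fun a ha b hb hab => ?_
    rw [cut_grad_horiz h2 h1 a b hab (ne ha hu) (ne hb hu)]
    simp
  obtain ⟨h0, h1, h2⟩ := h
  rw [abs_le] at h1 h2
  have h0' : ¬ (w.1 = w'.1 ∧ w.2 = w'.2) := fun h => h0 (Prod.ext h.1 h.2)
  have : w'.2 = w.2 - 1 ∨ w.2 = w'.2 - 1 ∨ (w'.2 = w.2 ∧ w'.1 = w.1 + 1) ∨
      (w.2 = w'.2 ∧ w.1 = w'.1 + 1) := by omega
  rcases this with h | h | h | h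
  · exact down w w' hw hw' h (by omega)
  · exact (down w' w hw' hw h (by omega)).symm
  · exact right w w' hw h.1 h.2
  · exact (right w' w hw' h.1 h.2).symm

/-- The principal argument has its branch cut along the half-line of `cut 0`. Its values on
the negative axis are `π`, so the jump occurs just below that axis. -/
theorem arg_div_adj {a b : Site} (hab : adj a b) (ha : a ≠ 0) (hb : b ≠ 0) :
    Complex.arg (toC b / toC a) =
      Complex.arg (toC b) - Complex.arg (toC a) + 2 * Real.pi * cut 0 a b := by
  have ne0 : ∀ {z : Site}, z ≠ 0 → toC z ≠ 0 := by
    intro z hz h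
    apply hz
    have h1 := congrArg Complex.re h
    have h2 := congrArg Complex.im h
    simp [toC] at h1 h2
    exact Prod.ext h1 h2
  have hre : ∀ z, (toC z).re = z.1 := by simp [toC]
  have him : ∀ z, (toC z).im = z.2 := by simp [toC]
  have hmod : ((Complex.arg (toC b / toC a) : ℝ) : Real.Angle) =
      ((Complex.arg (toC b) - Complex.arg (toC a) + 2 * Real.pi * cut 0 a b : ℝ) : Real.Angle) := by
    rw [Complex.arg_div_coe_angle (ne0 hb) (ne0 ha)]
    have : ((2 * Real.pi * cut 0 a b : ℝ) : Real.Angle) = 0 := by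
      rw [mul_comm, ← zsmul_eq_mul, Real.Angle.coe_zsmul, Real.Angle.coe_two_pi, smul_zero]
    rw [Real.Angle.coe_add, this, Real.Angle.coe_sub, add_zero]
  have hpi := Real.pi_pos
  have hA := Complex.arg_mem_Ioc (toC a)
  have hB := Complex.arg_mem_Ioc (toC b)
  have nonneg : ∀ {z : Site}, 0 ≤ z.2 → 0 ≤ Complex.arg (toC z) := by
    intro z hz; rw [Complex.arg_nonneg_iff, him]; exact_mod_cast hz
  have neg : ∀ {z : Site}, z.2 < 0 → Complex.arg (toC z) < 0 := by
    intro z hz; rw [Complex.arg_neg_iff, him]; exact_mod_cast hz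
  have argpi : ∀ {z : Site}, z.2 = 0 → z.1 < 0 → Complex.arg (toC z) = Real.pi := by
    intro z h2 h1
    rw [Complex.arg_eq_pi_iff, hre, him]
    exact ⟨by exact_mod_cast h1, by exact_mod_cast h2⟩
  have argzero : ∀ {z : Site}, z.2 = 0 → 0 ≤ z.1 → Complex.arg (toC z) = 0 := by
    intro z h2 h1
    rw [Complex.arg_eq_zero_iff, hre, him]
    exact ⟨by exact_mod_cast h1, by exact_mod_cast h2⟩
  have bounds : -Real.pi < Complex.arg (toC b) - Complex.arg (toC a) + 2 * Real.pi * cut 0 a b ∧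
      Complex.arg (toC b) - Complex.arg (toC a) + 2 * Real.pi * cut 0 a b ≤ Real.pi := by
    have hb' := adj_iff.1 hab
    have hb1 : b.1 = 0 → b.2 ≠ 0 := fun h h' => hb (Prod.ext h h')
    have ha1 : a.1 = 0 → a.2 ≠ 0 := fun h h' => ha (Prod.ext h h')
    simp only [Prod.ext_iff] at hb'
    rcases lt_or_ge a.2 0 with a2 | a2 <;> rcases lt_or_ge b.2 0 with b2 | b2
    · have hc : cut 0 a b = 0 := by simp [cut, a2, b2]
      have := neg a2
      have := neg b2
      rw [hc]
      constructor <;> push_cast <;> linarith [hA.1, hB.1]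
    · have hb0 : b.2 = 0 := by omega
      have := neg a2
      rcases lt_or_ge a.1 0 with a1 | a1
      · have hc : cut 0 a b = -1 := by simp [cut, a1, a2, b2]
        have := argpi hb0 (by omega)
        rw [hc]
        constructor <;> push_cast <;> linarith [hA.1]
      · have hc : cut 0 a b = 0 := by simp [cut, a1]
        have := argzero hb0 (by omega)
        rw [hc]
        constructor <;> push_cast <;> linarith [hA.1]
    · have ha0 : a.2 = 0 := by omega
      have := neg b2
      rcases lt_or_ge a.1 0 with a1 | a1
      · have hc : cut 0 a b = 1 := by simp [cut, a1, a2, b2]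
        have := argpi ha0 a1
        rw [hc]
        constructor <;> push_cast <;> linarith [hB.1]
      · have hc : cut 0 a b = 0 := by simp [cut, a1]
        have := argzero ha0 a1
        rw [hc]
        constructor <;> push_cast <;> linarith [hB.1]
    · have hc : cut 0 a b = 0 := by simp [cut, not_lt.2 a2, not_lt.2 b2]
      have h1 := nonneg a2
      have h2 := nonneg b2
      rw [hc]
      constructor
      · -- equality would force `a` and `b` onto opposite half-axes
        by_contra hcon
        push_cast at hcon
        have h3 : Complex.arg (toC a) = Real.pi := by linarith [hA.2]
        have h4 : Complex.arg (toC b) = 0 := by linarith [hA.2]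
        rw [Complex.arg_eq_pi_iff, hre, him] at h3
        rw [Complex.arg_eq_zero_iff, hre, him] at h4
        obtain ⟨h3, h3'⟩ := h3
        obtain ⟨h4, h4'⟩ := h4
        norm_cast at h3 h3' h4 h4'
        omega
      · push_cast; linarith [hB.2]
  have e1 := Complex.arg_coe_angle_toReal_eq_arg (toC b / toC a)
  rw [← e1, hmod]
  exact Real.Angle.toReal_coe_eq_self_iff.2 bounds

theorem winding_eq_stepSum {P : List Site} (hP : P.IsChain adj) (h0 : (0 : Site) ∉ P)
    (hne : P ≠ []) :
    2 * Real.pi * winding P = Complex.arg (toC (P.getLast hne)) - Complex.arg (toC (P.head hne)) +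
      2 * Real.pi * stepSum (cut 0) P := by
  have hpi := Real.pi_ne_zero
  have hw : 2 * Real.pi * winding P =
      ((P.zip P.tail).map fun p => Complex.arg (toC p.2 / toC p.1)).sum := by
    rw [winding]; field_simp
  rw [hw]
  clear hw
  induction P with
  | nil => exact absurd rfl hne
  | cons a l ih =>
    cases l with
    | nil => simp [stepSum]
    | cons b l =>
      rw [List.isChain_cons_cons] at hP
      have h0' : (0 : Site) ∉ b :: l := fun h => h0 (List.mem_cons_of_mem _ h)
      have := ih hP.2 h0' (by simp)
      simp only [List.tail_cons, List.zip_cons_cons, List.map_cons, List.sum_cons, stepSum] at this ⊢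
      rw [this, arg_div_adj hP.1 (fun h => h0 (by simp [h])) (fun h => h0' (by simp [h]))]
      simp only [List.head_cons, List.getLast_cons_cons]
      push_cast
      ring

theorem stepSum_map (φ : Site → Site → ℤ) (g : Site → Site) (P : List Site) :
    stepSum φ (P.map g) = stepSum (fun a b => φ (g a) (g b)) P := by
  induction P with
  | nil => rfl
  | cons a l ih =>
    cases l with
    | nil => rfl
    | cons b l => simpa [stepSum] using ih

theorem windingAround_eq_cutNumber {C : List Site} (hC : IsCircuit C) {w : Site} (hw : w ∉ C) :
    windingAround (C ++ C.take 1) w = cutNumber C w := by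
  obtain ⟨a, l, rfl, hE, hch, hm⟩ := hC.closed
  have hch' : ((a :: (l ++ [a])).map fun z => z - w).IsChain adj := by
    rw [List.isChain_map]
    refine hch.imp fun x y h => ?_
    simpa [adj] using h
  have key := winding_eq_stepSum hch' (by
    rw [List.mem_map]
    rintro ⟨z, hz, h⟩
    exact hw (sub_eq_zero.1 h ▸ hm z hz)) (by simp)
  have hcut : (fun x y : Site => cut 0 (x - w) (y - w)) = cut w := by
    funext x y
    simp [cut]
  rw [stepSum_map, hcut] at key
  rw [windingAround, cutNumber, hE]
  simp only [List.getLast_map, List.head_map, List.head_cons] at key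
  rw [List.getLast_cons (by simp), List.getLast_append_of_ne_nil _ (by simp)] at key
  simp only [List.getLast_singleton, sub_self, zero_add] at key
  exact mul_left_cancel₀ (by positivity) key

theorem circuitEncloses_iff {C : List Site} (hC : IsCircuit C) {w : Site} (hw : w ∉ C) :
    circuitEncloses C w ↔ cutNumber C w ≠ 0 := by
  rw [circuitEncloses, windingAround_eq_cutNumber hC hw, Int.cast_ne_zero]
  exact and_iff_right hw

/-! ### A circuit in the `*`boundary of a finite set -/

/-- `Linked Z φ x y n`: some nearest-neighbour walk inside `Z` leads from `x` to `y`, and the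
values of `φ` along its oriented edges add up to `n`. -/
inductive Linked (Z : Set Site) (φ : Site → Site → ℤ) : Site → Site → ℤ → Prop
  | refl {x : Site} (hx : x ∈ Z) : Linked Z φ x x 0
  | cons {x y z : Site} {n : ℤ} (hx : x ∈ Z) (hxy : adj x y) (h : Linked Z φ y z n) :
      Linked Z φ x z (φ x y + n)

namespace Linked

variable {Z : Set Site} {φ : Site → Site → ℤ}

theorem right_mem {x y : Site} {n : ℤ} (h : Linked Z φ x y n) : y ∈ Z := by
  induction h with
  | refl hx => exact hx
  | cons _ _ _ ih => exact ih

theorem left_mem {x y : Site} {n : ℤ} (h : Linked Z φ x y n) : x ∈ Z := by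
  cases h <;> assumption

theorem trans {x y z : Site} {m n : ℤ} (h : Linked Z φ x y m) (h' : Linked Z φ y z n) :
    Linked Z φ x z (m + n) := by
  induction h with
  | refl => simpa using h'
  | cons hx hxy _ ih => rw [add_assoc]; exact .cons hx hxy (ih h')

theorem symm (hφ : ∀ a b, adj a b → φ b a = -φ a b) {x y : Site} {n : ℤ}
    (h : Linked Z φ x y n) : Linked Z φ y x (-n) := by
  induction h with
  | refl hx => exact .refl hx
  | @cons x y z n hx hxy h ih =>
    have hyx : adj y x := by
      have : (y.1 - x.1) ^ 2 + (y.2 - x.2) ^ 2 = 1 := by rw [← hxy]; ring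
      exact this
    have h1 : Linked Z φ y x (φ y x + 0) := .cons h.left_mem hyx (.refl hx)
    have h2 := ih.trans h1
    rw [hφ x y hxy] at h2
    convert h2 using 1
    ring

theorem exists_list {x y : Site} {n : ℤ} (h : Linked Z φ x y n) :
    ∃ l : List Site, (x :: l).IsChain adj ∧ (∀ z ∈ x :: l, z ∈ Z) ∧
      (x :: l).getLast (by simp) = y ∧ stepSum φ (x :: l) = n := by
  induction h with
  | refl hx => exact ⟨[], by simp, by simpa using hx, rfl, rfl⟩
  | @cons x y z n hx hxy h ih =>
    obtain ⟨l, h1, h2, h3, h4⟩ := ih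
    refine ⟨y :: l, List.isChain_cons_cons.2 ⟨hxy, h1⟩, ?_, by simpa using h3, by simp [stepSum, h4]⟩
    intro z hz
    rcases List.mem_cons.1 hz with rfl | hz
    · exact hx
    · exact h2 z hz

/-- A closed walk with nonzero sum is not constant, hence is a circuit once its repeated
endpoint is dropped. -/
theorem exists_circuit {x : Site} {n : ℤ} (h : Linked Z φ x x n) (hn : n ≠ 0) :
    ∃ C : List Site, IsCircuit C ∧ (∀ z ∈ C, z ∈ Z) ∧ stepSum φ (C ++ C.take 1) = n := by
  obtain ⟨l, h1, h2, h3, h4⟩ := h.exists_list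
  rcases List.eq_nil_or_concat' l with rfl | ⟨l, y, rfl⟩
  · exact absurd h4.symm hn
  · have hy : y = x := by simpa using h3
    subst hy
    rw [← List.cons_append] at h1 h2
    have h5 := List.isChain_append.1 h1
    refine ⟨y :: l, ⟨h5.1, by simp, ?_⟩, fun z hz => h2 z (List.mem_append_left _ hz), by simpa using h4⟩
    exact h5.2.2 _ (by rw [List.getLast?_eq_getLast_of_ne_nil (by simp)]; simp) _ (by simp)

/-- If `φ` is antisymmetric and sums to zero along every closed walk in `Z`, then on `Z` it is
the gradient of a potential. The potential at `x` is minus the sum of `φ` along any walk from `x`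
to a base point chosen in the component of `x`. -/
theorem exists_potential (hφ : ∀ a b, adj a b → φ b a = -φ a b)
    (h0 : ∀ x n, Linked Z φ x x n → n = 0) :
    ∃ h : Site → ℤ, ∀ a ∈ Z, ∀ b ∈ Z, adj a b → φ a b = h b - h a := by
  classical
  set r : Site → Site := fun x => Classical.epsilon fun y => ∃ n, Linked Z φ x y n with hr
  set p : Site → ℤ := fun x => Classical.epsilon fun n => Linked Z φ x (r x) n with hp
  have hlink : ∀ x ∈ Z, Linked Z φ x (r x) (p x) := by
    intro x hx
    have h1 : ∃ y, ∃ n, Linked Z φ x y n := ⟨x, 0, .refl hx⟩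
    exact Classical.epsilon_spec (Classical.epsilon_spec h1)
  refine ⟨fun x => -p x, fun a ha b hb hab => ?_⟩
  have hedge : Linked Z φ a b (φ a b) := by simpa using Linked.cons ha hab (.refl hb)
  -- the base point depends only on the set of sites linked to `a`, which is also that of `b`
  have hrab : r a = r b := by
    simp only [hr]
    congr 1
    funext y
    apply propext
    constructor
    · rintro ⟨n, hn⟩
      exact ⟨_, (hedge.symm hφ).trans hn⟩
    · rintro ⟨n, hn⟩
      exact ⟨_, hedge.trans hn⟩
  have hA := hlink a ha
  rw [hrab] at hA
  have := h0 _ _ ((hedge.trans (hlink b hb)).trans (hA.symm hφ))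
  linarith

end Linked

/-- Stokes on the grid: if the two monotone ways around each unit square give the same sum of
`φ`, so do the two ways around the boundary of a rectangle. -/
theorem sum_around_square (φ : Site → Site → ℤ)
    (hsq : ∀ x y : ℤ, φ (x, y) (x + 1, y) + φ (x + 1, y) (x + 1, y + 1) =
      φ (x, y) (x, y + 1) + φ (x, y + 1) (x + 1, y + 1)) (x y : ℤ) (m n : ℕ) :
    ∑ i ∈ Finset.range m, φ (x + i, y) (x + i + 1, y) +
      ∑ j ∈ Finset.range n, φ (x + m, y + j) (x + m, y + j + 1) =
    ∑ j ∈ Finset.range n, φ (x, y + j) (x, y + j + 1) +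
      ∑ i ∈ Finset.range m, φ (x + i, y + n) (x + i + 1, y + n) := by
  have row : ∀ y : ℤ, ∑ i ∈ Finset.range m, φ (x + i, y) (x + i + 1, y) + φ (x + m, y) (x + m, y + 1)
      = φ (x, y) (x, y + 1) + ∑ i ∈ Finset.range m, φ (x + i, y + 1) (x + i + 1, y + 1) := by
    intro y
    induction m with
    | zero => simp
    | succ m ih =>
      rw [Finset.sum_range_succ, Finset.sum_range_succ]
      have := hsq (x + m) y
      push_cast
      rw [← add_assoc x]
      linarith
  induction n with
  | zero => simp
  | succ n ih =>
    rw [Finset.sum_range_succ, Finset.sum_range_succ]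
    have := row (y + n)
    push_cast
    rw [← add_assoc y]
    linarith

theorem exists_box (F : Finset Site) :
    ∃ m : ℕ, ∀ z ∈ F, -(m : ℤ) ≤ z.1 ∧ z.1 ≤ m ∧ -(m : ℤ) ≤ z.2 ∧ z.2 ≤ m := by
  refine ⟨F.sup fun z => z.1.natAbs + z.2.natAbs, fun z hz => ?_⟩
  have := Finset.le_sup (f := fun z : Site => z.1.natAbs + z.2.natAbs) hz
  omega

/-- Every site `w` of a finite set `D` is surrounded by a circuit contained in the
`*`boundary of `D`. Otherwise `cut w` is a gradient `dp` on the `*`boundary. Replacing it by `dp`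
on all edges that touch `D` gives an edge function that sums to zero around every unit square: a
square meeting `D` lies in the union of `D` and its `*`boundary, because the corners of a square
are pairwise `*`adjacent, and a square missing `D` does not contain `w`. So the sum around a large
square vanishes as well, but there the function is `cut w`, whose sum is not zero. -/
theorem exists_circuit_starBoundary (D : Finset Site) {w : Site} (hw : w ∈ D) :
    ∃ C : List Site, IsCircuit C ∧ (∀ z ∈ C, z ∈ starBoundary (D : Set Site)) ∧
      cutNumber C w ≠ 0 := by
  classical
  by_contra hcon
  push Not at hcon
  set Z := starBoundary (D : Set Site) with hZ
  have h0 : ∀ x n, Linked Z (cut w) x x n → n = 0 := by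
    intro x n h
    by_contra hn
    obtain ⟨C, h1, h2, h3⟩ := h.exists_circuit hn
    exact hn (h3.symm.trans (hcon C h1 h2))
  obtain ⟨p, hp⟩ := Linked.exists_potential (fun a b hab => cut_symm hab) h0
  set φ : Site → Site → ℤ := fun a b => if a ∈ D ∨ b ∈ D then p b - p a else cut w a b with hφ
  have hsq : ∀ x y : ℤ, φ (x, y) (x + 1, y) + φ (x + 1, y) (x + 1, y + 1) =
      φ (x, y) (x, y + 1) + φ (x, y + 1) (x + 1, y + 1) := by
    intro x y
    set s : Finset Site := {(x, y), (x + 1, y), (x, y + 1), (x + 1, y + 1)} with hs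
    by_cases hD : ∃ d ∈ s, d ∈ D
    · obtain ⟨d, hds, hdD⟩ := hD
      have hmem : ∀ z ∈ s, z ∉ D → z ∈ Z := by
        intro z hz hzD
        refine ⟨hzD, d, hdD, fun h => hzD (h ▸ hdD), ?_⟩
        simp only [hs, Finset.mem_insert, Finset.mem_singleton] at hz hds
        rcases hz with rfl | rfl | rfl | rfl <;> rcases hds with rfl | rfl | rfl | rfl <;> simp
      have hgrad : ∀ a ∈ s, ∀ b ∈ s, adj a b → φ a b = p b - p a := by
        intro a ha b hb hab
        by_cases h : a ∈ D ∨ b ∈ D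
        · simp only [hφ, if_pos h]
        · simp only [hφ, if_neg h]
          push Not at h
          exact hp a (hmem a ha h.1) b (hmem b hb h.2) hab
      rw [hgrad _ (by simp [hs]) _ (by simp [hs]) (by simp [adj]),
        hgrad _ (by simp [hs]) _ (by simp [hs]) (by simp [adj]),
        hgrad _ (by simp [hs]) _ (by simp [hs]) (by simp [adj]),
        hgrad _ (by simp [hs]) _ (by simp [hs]) (by simp [adj])]
      ring
    · push Not at hD
      have h1 := hD (x, y) (by simp [hs])
      have h2 := hD (x + 1, y) (by simp [hs])
      have h3 := hD (x, y + 1) (by simp [hs])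
      have h4 := hD (x + 1, y + 1) (by simp [hs])
      have h5 : ¬ (w.1 = x + 1 ∧ w.2 = y + 1) := fun h => h4 (by
        have : w = (x + 1, y + 1) := Prod.ext h.1 h.2
        exact this ▸ hw)
      simp only [hφ, h1, h2, h3, h4, or_self, if_false, cut]
      split_ifs <;> omega
  obtain ⟨m, hm⟩ := exists_box D
  have hwm := hm w hw
  have key := sum_around_square φ hsq (-(m + 1 : ℤ)) (-(m + 1 : ℤ)) (2 * m + 2) (2 * m + 2)
  have hout : ∀ a b : Site, (a.1 < -m ∨ m < a.1 ∨ a.2 < -m ∨ m < a.2) →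
      (b.1 < -m ∨ m < b.1 ∨ b.2 < -m ∨ m < b.2) → φ a b = cut w a b := by
    intro a b ha hb
    have h1 : a ∉ D := fun h => by have := hm a h; omega
    have h2 : b ∉ D := fun h => by have := hm b h; omega
    simp [hφ, h1, h2]
  -- on the large square `cut w` vanishes except along the left side, where it telescopes
  have e1 : ∀ i ∈ Finset.range (2 * m + 2),
      φ (-(m + 1 : ℤ) + i, -(m + 1 : ℤ)) (-(m + 1 : ℤ) + i + 1, -(m + 1 : ℤ)) = 0 := by
    intro i _
    rw [hout _ _ (by dsimp only; omega) (by dsimp only; omega)]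
    simp [cut]
  have e2 : ∀ j ∈ Finset.range (2 * m + 2),
      φ (-(m + 1 : ℤ) + (2 * m + 2 : ℕ), -(m + 1 : ℤ) + j)
        (-(m + 1 : ℤ) + (2 * m + 2 : ℕ), -(m + 1 : ℤ) + j + 1) = 0 := by
    intro i _
    rw [hout _ _ (by dsimp only; omega) (by dsimp only; omega)]
    simp only [cut]
    rw [if_neg (by push_cast; omega)]
  have e4 : ∀ i ∈ Finset.range (2 * m + 2),
      φ (-(m + 1 : ℤ) + i, -(m + 1 : ℤ) + (2 * m + 2 : ℕ))
        (-(m + 1 : ℤ) + i + 1, -(m + 1 : ℤ) + (2 * m + 2 : ℕ)) = 0 := by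
    intro i _
    rw [hout _ _ (by dsimp only; omega) (by dsimp only; omega)]
    simp [cut]
  obtain ⟨T, hT⟩ : ∃ T : ℕ → ℤ, ∀ j, T j = if -(m + 1 : ℤ) + j < w.2 then 1 else 0 :=
    ⟨_, fun _ => rfl⟩
  have e3 : ∀ j ∈ Finset.range (2 * m + 2),
      φ (-(m + 1 : ℤ), -(m + 1 : ℤ) + j) (-(m + 1 : ℤ), -(m + 1 : ℤ) + j + 1) =
        T (j + 1) - T j := by
    intro j _
    rw [hout _ _ (by dsimp only; omega) (by dsimp only; omega)]
    simp only [cut]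
    rw [if_pos (by omega)]
    rw [hT, hT]
    push_cast
    rw [add_assoc]
  rw [Finset.sum_eq_zero e1, Finset.sum_eq_zero e2, Finset.sum_eq_zero e4, Finset.sum_congr rfl e3,
    Finset.sum_range_sub] at key
  rw [hT, hT, if_neg (by push_cast; omega), if_pos (by push_cast; omega)] at key
  omega

/-! ### Proof of the bottleneck lemma -/

theorem cutNumber_const_on_box {C : List Site} (hC : IsCircuit C) (m : ℕ)
    (hm : ∀ z : Site, -(m : ℤ) ≤ z.1 → z.1 ≤ m → -(m : ℤ) ≤ z.2 → z.2 ≤ m → z ∉ C) (w : Site)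
    (h1 : -(m : ℤ) ≤ w.1) (h2 : w.1 ≤ m) (h3 : -(m : ℤ) ≤ w.2) (h4 : w.2 ≤ m) :
    cutNumber C w = cutNumber C (-m, -m) := by
  obtain ⟨x, y⟩ := w
  have hx : x ≤ m → cutNumber C (x, y) = cutNumber C (-m, y) := by
    induction x, h1 using Int.le_induction with
    | base => exact fun _ => rfl
    | succ k hk ih =>
      intro hle
      rw [← ih (by dsimp only at *; omega) h3 h4 (by omega)]
      refine (cutNumber_adjStar hC (hm _ ?_ ?_ ?_ ?_) (hm _ ?_ ?_ ?_ ?_) ?_).symm <;>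
        first | (simp [adjStar]; done) | (dsimp only at *; omega)
  rw [hx h2]
  have hy : y ≤ m → cutNumber C (-m, y) = cutNumber C (-m, -m) := by
    clear hx
    induction y, h3 using Int.le_induction with
    | base => exact fun _ => rfl
    | succ k hk ih =>
      intro hle
      rw [← ih h1 h2 (by dsimp only at *; omega) (by omega)]
      refine (cutNumber_adjStar hC (hm _ ?_ ?_ ?_ ?_) (hm _ ?_ ?_ ?_ ?_) ?_).symm <;>
        first | (simp [adjStar]; done) | (dsimp only at *; omega)
  exact hy h4

/-- An infinite self-avoiding `*`path that starts inside a circuit must visit it: otherwise the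
cut number would be constant along the path, while it vanishes far away. -/
theorem exists_mem_circuit {C : List Site} (hC : IsCircuit C) {f : ℕ → Site}
    (hf : Function.Injective f) (hadj : ∀ i, adjStar (f i) (f (i + 1)))
    (h0 : cutNumber C (f 0) ≠ 0) : ∃ k, f k ∈ C := by
  by_contra! hcon
  have hconst : ∀ k, cutNumber C (f k) = cutNumber C (f 0) := by
    intro k
    induction k with
    | zero => rfl
    | succ k ih => rw [← ih, cutNumber_adjStar hC (hcon k) (hcon (k + 1)) (hadj k)]
  obtain ⟨M, hM⟩ := exists_box C.toFinset
  obtain ⟨k, hk⟩ := (Set.infinite_range_of_injective hf).exists_notMem_finset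
    (Finset.Icc (-(M : ℤ), -(M : ℤ)) ((M : ℤ), (M : ℤ)))
  obtain ⟨⟨k, rfl⟩, hk⟩ := hk
  apply h0
  rw [← hconst k]
  apply cutNumber_far hC
  have hM' : ∀ a ∈ C, _ := fun a ha => hM a (List.mem_toFinset.2 ha)
  simp only [Finset.mem_Icc, Prod.le_def] at hk
  have : (f k).1 < -M ∨ (M : ℤ) < (f k).1 ∨ (f k).2 < -M ∨ (M : ℤ) < (f k).2 := by omega
  rcases this with h | h | h | h
  · exact .inl fun a ha => by have := hM' a ha; omega
  · exact .inr (.inl fun a ha => by have := hM' a ha; omega)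
  · exact .inr (.inr (.inl fun a ha => by have := hM' a ha; omega))
  · exact .inr (.inr (.inr fun a ha => by have := hM' a ha; omega))

/-- `menger_ray` for the `*`graph on the `1`sites outside `B`, with the `1`sites `*`adjacent
to `B` as starting points, gives at most `n` sites that contain all `1`sites in the `*`boundary of
some finite `D ⊇ B`. -/
theorem exists_separator (σ : Config) (n : ℕ) (h : ¬ HasNDisjoint1 σ (n + 1)) (B : Finset Site) :
    ∃ D X : Finset Site, B ⊆ D ∧ X.card ≤ n ∧
      ∀ z ∈ starBoundary (D : Set Site), σ z = true → z ∈ X := by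
  classical
  set p : Site → Prop := fun z => σ z = true ∧ z ∉ B with hp
  set blk : Site → Finset Site := fun z => Finset.Icc (z.1 - 1, z.2 - 1) (z.1 + 1, z.2 + 1) with hblk
  have hmem : ∀ {x z : Site}, adjStar x z → x ∈ blk z := by
    rintro x z ⟨-, h1, h2⟩
    rw [abs_le] at h1 h2
    simp only [hblk, Finset.mem_Icc, Prod.le_def]
    omega
  -- `blk z` also contains `z`, which is harmless: the starting points then include the
  -- `1`sites of `B.biUnion blk` outside `B`, and injective rays never stay put
  rcases menger_ray (V := {z // p z}) (fun v => (blk v).subtype p) ((B.biUnion blk).subtype p) n with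
    ⟨S, hS⟩ | ⟨g, hg1, hg2, hg3⟩
  · refine ⟨B ∪ S.map (Function.Embedding.subtype p), _, Finset.subset_union_left,
      (Finset.card_map (Function.Embedding.subtype p)).trans_le hS, ?_⟩
    rintro z ⟨hzD, y, hyD, hzy⟩ hz
    have hzB : z ∉ B := fun h => hzD (by simp [h])
    have hzS : (⟨z, hz, hzB⟩ : {z // p z}) ∉ S := fun h => hzD (by
      rw [Finset.mem_coe, Finset.mem_union, Finset.mem_map]
      exact .inr ⟨_, h, rfl⟩)
    refine Finset.mem_map.2 ⟨⟨z, hz, hzB⟩, ?_, rfl⟩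
    rw [Finset.mem_coe, Finset.mem_union, Finset.mem_map] at hyD
    rw [Finset.mem_union, Finset.mem_sdiff, Finset.mem_sdiff]
    rcases hyD with hy | ⟨v, hv, rfl⟩
    · exact .inl ⟨Finset.mem_subtype.2 (Finset.mem_biUnion.2 ⟨y, hy, hmem hzy⟩), hzS⟩
    · exact .inr ⟨Finset.mem_biUnion.2 ⟨v, hv, Finset.mem_subtype.2 (hmem hzy)⟩, hzS⟩
  · refine absurd ⟨fun i k => (g i k : Site), fun i => ⟨?_, fun k => ⟨?_, ?_⟩, fun k => (g i k).2.1⟩,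
      fun i j hij => ?_⟩ h
    · exact Subtype.val_injective.comp (hg1 i)
    · intro heq
      have := hg1 i (Subtype.ext heq)
      omega
    · have := Finset.mem_subtype.1 (hg2 i k)
      simp only [hblk, Finset.mem_Icc, Prod.le_def] at this
      rw [abs_le, abs_le]
      dsimp only
      omega
    · rw [Set.disjoint_left]
      rintro _ ⟨k, rfl⟩ ⟨l, hl⟩
      exact hg3 i j hij k l (Subtype.ext hl.symm)

/-- Bottleneck lemma: if the maximal number of pairwise disjoint infinite self-avoiding
`1*`paths of `σ` is exactly `N`, then around every finite `Γ` there is a necklet with `N`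
`1`pearls, i.e. a circuit `C` around `Γ` with `|C ∩ σ⁻¹(1)| = N`. -/
theorem statement9 (N : ℕ) (σ : Config)
    (hN : HasNDisjoint1 σ N) (hN1 : ¬ HasNDisjoint1 σ (N + 1))
    (Γ : Finset Site) :
    ∃ C : List Site, IsCircuit C ∧ CircuitAround C ↑Γ ∧
      (C.toFinset.filter fun z => σ z = true).card = N := by
  obtain ⟨f, hf, hdisj⟩ := hN
  obtain ⟨m, hm⟩ := exists_box (Γ ∪ Finset.univ.image fun i => f i 0)
  set B : Finset Site := Finset.Icc (-(m : ℤ), -(m : ℤ)) ((m : ℤ), (m : ℤ)) with hB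
  obtain ⟨D, X, hBD, hX, hXD⟩ := exists_separator σ N hN1 B
  have hmemB : ∀ z : Site, -(m : ℤ) ≤ z.1 → z.1 ≤ m → -(m : ℤ) ≤ z.2 → z.2 ≤ m → z ∈ B := by
    intro z h1 h2 h3 h4
    simp only [hB, Finset.mem_Icc, Prod.le_def]
    exact ⟨⟨h1, h3⟩, h2, h4⟩
  obtain ⟨C, hC, hCD, hwind⟩ := exists_circuit_starBoundary D (w := (-m, -m))
    (hBD (hmemB _ (by simp) (by simp) (by simp) (by simp)))
  have hoff : ∀ z : Site, -(m : ℤ) ≤ z.1 → z.1 ≤ m → -(m : ℤ) ≤ z.2 → z.2 ≤ m → z ∉ C :=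
    fun z h1 h2 h3 h4 hz => (hCD z hz).1 (hBD (hmemB z h1 h2 h3 h4))
  have hin : ∀ z ∈ Γ ∪ Finset.univ.image (fun i => f i 0), z ∉ C ∧ cutNumber C z ≠ 0 := by
    intro z hz
    obtain ⟨h1, h2, h3, h4⟩ := hm z hz
    exact ⟨hoff z h1 h2 h3 h4, by rwa [cutNumber_const_on_box hC m hoff z h1 h2 h3 h4]⟩
  refine ⟨C, hC, fun z hz => ?_, le_antisymm ?_ ?_⟩
  · have := hin z (Finset.mem_union_left _ hz)
    exact (circuitEncloses_iff hC this.1).2 this.2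
  · refine (Finset.card_le_card fun z hz => ?_).trans hX
    rw [Finset.mem_filter, List.mem_toFinset] at hz
    exact hXD z (hCD z hz.1) hz.2
  · have hcross : ∀ i, ∃ k, f i k ∈ C := fun i =>
      exists_mem_circuit hC (hf i).1 (hf i).2.1
        (hin _ (Finset.mem_union_right _ (Finset.mem_image_of_mem _ (Finset.mem_univ i)))).2
    choose k hk using hcross
    have hinj : Function.Injective fun i => f i (k i) := by
      intro i j hij
      by_contra hne
      exact Set.disjoint_left.1 (hdisj i j hne) ⟨k i, rfl⟩ ⟨k j, hij.symm⟩
    have := Finset.card_le_card_of_injOn (s := Finset.univ)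
      (t := C.toFinset.filter fun z => σ z = true) (fun i => f i (k i))
      (fun i _ => by simp [hk i, (hf i).2.2 (k i)]) hinj.injOn
    simpa using this

end Percolation
end

section
/- Let d ∈ ℕ, Δ = {−d,…,d}² ⊂ ℤ², and let σ ∈ {0,1}^{ℤ²} be a configuration. If every 1*cluster of σ that meets ∂*Δ is finite, then there exists a self-avoiding 0circuit around Δ with respect to σ. Dually, if every 0cluster of σ that meets ∂*Δ is finite, then there exists a self-avoiding 1*circuit around Δ with respect to σ. -/
/-! Let `A` be the union of `Δ` and all clusters of the given kind that meet `∂*Δ`. This set is finite,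
and its neighbours outside carry the opposite spin (`exists_finite_hull`). Let `B` be the set of
sites of the opposite spin off `A`. The circuit is found in `B` by a discrete cohomology argument,
which needs neither boundary tracing nor connectedness of the outer boundary of `A`.

The winding number of a loop around a site `w` off the loop is the signed number `crossSum w` of
its crossings with the ray leaving `w` to the left, since the swept angle of a step is the increment
of the principal argument except at the branch cut (`arg_step`, `windingAround_loop`). It is the same
for all sites of `Δ` if the loop avoids `Δ` (`crossSum_square`). It is additive when a loop is cut at
a repeated site, so any loop in `B` with non-zero crossing number yields a self-avoiding one
(`exists_nodup_loop`).

If no loop in `B` had a non-zero crossing number around the origin, the crossing cochain `cross 0`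
would be the coboundary of a potential `h` on `B` (`exists_potential`). Extend `h` to the lattice,
subtract its coboundary from `cross 0`, and keep only the edges touching `A`. The result has finite
support. Its circulation around a plaquette is still that of `cross 0`, because the omitted edges
near `A` join sites of `B`, where `cross 0` equals the coboundary of `h`. For `*`loops in `B`, a
plaquette with a single corner in `A` is treated by its diagonal instead. But the circulation of
`cross 0` is the point mass at one plaquette next to the origin, whereas the total circulation of a
finitely supported cochain is zero (`no_point_circulation`).
-/

open MeasureTheory ProbabilityTheory
open scoped ENNReal

namespace Percolation

/-! ### Winding numbers as crossing counts -/

/-- Signed crossing of the step `u → v` with the horizontal ray leaving `w` to the left, the ray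
being thought of as slightly lowered, so that it separates row `w.2` from row `w.2 - 1`:
`+1` downwards, `-1` upwards. -/
def cross (w u v : Site) : ℤ :=
  if u.2 = w.2 ∧ u.1 < w.1 ∧ v.2 = w.2 - 1 then 1
  else if v.2 = w.2 ∧ v.1 < w.1 ∧ u.2 = w.2 - 1 then -1 else 0

/-- Total signed crossing number of a lattice path with the ray leaving `w` to the left. -/
def crossSum (w : Site) : List Site → ℤ
  | [] => 0
  | [_] => 0
  | u :: v :: l => cross w u v + crossSum w (v :: l)

lemma crossSum_append (w : Site) (X Y : List Site) (a : Site) :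
    crossSum w (X ++ a :: Y) = crossSum w (X ++ [a]) + crossSum w (a :: Y) := by
  induction X with
  | nil => simp [crossSum]
  | cons b X ih =>
    cases X with
    | nil => simp [crossSum]
    | cons c X =>
      simp only [List.cons_append, crossSum] at ih ⊢
      rw [ih]; ring

lemma toC_re (z : Site) : (toC z).re = z.1 := by simp [toC]
lemma toC_im (z : Site) : (toC z).im = z.2 := by simp [toC]

lemma toC_ne_zero {z : Site} (h : z ≠ 0) : toC z ≠ 0 := by
  intro h0
  apply h
  have h1 := toC_re z
  have h2 := toC_im z
  rw [h0] at h1 h2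
  ext
  · exact_mod_cast h1.symm
  · exact_mod_cast h2.symm

/-- The angle swept by a step about the origin is the increment of the principal argument,
corrected by `2π` exactly when the step crosses the branch cut. -/
lemma arg_step {u v : Site} (hu : u ≠ 0) (hv : v ≠ 0) (h : adjStar u v) :
    Complex.arg (toC v / toC u)
      = Complex.arg (toC v) - Complex.arg (toC u) + 2 * Real.pi * (cross 0 u v : ℤ) := by
  set θ := Complex.arg (toC v) - Complex.arg (toC u) + 2 * Real.pi * (cross 0 u v : ℤ) with hθ
  have hcoe : ((Complex.arg (toC v / toC u) : ℝ) : Real.Angle) = (θ : ℝ) := by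
    rw [Complex.arg_div_coe_angle (toC_ne_zero hv) (toC_ne_zero hu), ← Real.Angle.coe_sub,
      Real.Angle.angle_eq_iff_two_pi_dvd_sub]
    exact ⟨-cross 0 u v, by rw [hθ]; push_cast; ring⟩
  have key : -Real.pi < θ ∧ θ ≤ Real.pi := by
    obtain ⟨u1, u2⟩ := u
    obtain ⟨v1, v2⟩ := v
    obtain ⟨-, h1, h2⟩ := h
    simp only [abs_le, ne_eq, Prod.mk_eq_zero] at h1 h2 hu hv
    have nn : ∀ z : Site, 0 ≤ (toC z).arg ↔ 0 ≤ z.2 := fun z => by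
      rw [Complex.arg_nonneg_iff, toC_im]; exact_mod_cast Iff.rfl
    have ng : ∀ z : Site, (toC z).arg < 0 ↔ z.2 < 0 := fun z => by
      rw [Complex.arg_neg_iff, toC_im]; exact_mod_cast Iff.rfl
    have ep : ∀ z : Site, (toC z).arg = Real.pi ↔ z.1 < 0 ∧ z.2 = 0 := fun z => by
      rw [Complex.arg_eq_pi_iff, toC_im, toC_re]; norm_cast
    have ez : ∀ z : Site, (toC z).arg = 0 ↔ 0 ≤ z.1 ∧ z.2 = 0 := fun z => by
      rw [Complex.arg_eq_zero_iff, toC_im, toC_re]; norm_cast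
    have hpi := Real.pi_pos
    have bu1 := Complex.neg_pi_lt_arg (toC (u1, u2))
    have bu2 := Complex.arg_le_pi (toC (u1, u2))
    have bv1 := Complex.neg_pi_lt_arg (toC (v1, v2))
    have bv2 := Complex.arg_le_pi (toC (v1, v2))
    have nnu := nn (u1, u2)
    have nnv := nn (v1, v2)
    have ngu := ng (u1, u2)
    have ngv := ng (v1, v2)
    have epu := ep (u1, u2)
    have epv := ep (v1, v2)
    have ezu := ez (u1, u2)
    have ezv := ez (v1, v2)
    simp only at nnu nnv ngu ngv epu epv ezu ezv
    rw [hθ]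
    by_cases hu2 : 0 ≤ u2 <;> by_cases hv2 : 0 ≤ v2
    · have hc : cross 0 (u1, u2) (v1, v2) = 0 := by simp [cross]; omega
      rw [hc]
      have a1 := nnu.2 hu2
      have a2 := nnv.2 hv2
      refine ⟨?_, by push_cast; linarith⟩
      push_cast
      by_contra hcon
      have e1 : (toC (u1, u2)).arg = Real.pi := by linarith
      have e2 : (toC (v1, v2)).arg = 0 := by linarith
      rw [epu] at e1
      rw [ezv] at e2
      omega
    · have a1 := nnu.2 hu2
      have a2 := ngv.2 (by omega)
      by_cases hx : u1 < 0
      · have hc : cross 0 (u1, u2) (v1, v2) = 1 := by simp [cross]; omega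
        have e1 := epu.2 ⟨hx, by omega⟩
        rw [hc, e1]; push_cast; constructor <;> linarith
      · have hc : cross 0 (u1, u2) (v1, v2) = 0 := by simp [cross]; omega
        have e1 := ezu.2 ⟨by omega, by omega⟩
        rw [hc, e1]; push_cast; constructor <;> linarith
    · have a1 := nnv.2 hv2
      have a2 := ngu.2 (by omega)
      by_cases hx : v1 < 0
      · have hc : cross 0 (u1, u2) (v1, v2) = -1 := by simp [cross]; omega
        have e1 := epv.2 ⟨hx, by omega⟩
        rw [hc, e1]; push_cast; constructor <;> linarith
      · have hc : cross 0 (u1, u2) (v1, v2) = 0 := by simp [cross]; omega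
        have e1 := ezv.2 ⟨by omega, by omega⟩
        rw [hc, e1]; push_cast; constructor <;> linarith
    · have hc : cross 0 (u1, u2) (v1, v2) = 0 := by simp [cross]; omega
      have a1 := ngu.2 (by omega)
      have a2 := ngv.2 (by omega)
      rw [hc]; push_cast; constructor <;> linarith
  have h1 := congrArg Real.Angle.toReal hcoe
  rwa [Complex.arg_coe_angle_toReal_eq_arg, Real.Angle.toReal_coe_eq_self_iff.2 key] at h1

lemma cross_sub (w u v : Site) : cross 0 (u - w) (v - w) = cross w u v := by
  simp only [cross, Prod.fst_sub, Prod.snd_sub, Prod.fst_zero, Prod.snd_zero]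
  congr 1
  · apply propext; omega
  · congr 1; apply propext; omega

/-- The swept angles along a path telescope up to the crossing number. -/
lemma sum_arg (w : Site) (a : Site) (l : List Site) (hc : (a :: l).IsChain adjStar)
    (hw : w ∉ a :: l) :
    (((((a :: l).map fun z => z - w)).zip ((a :: l).map fun z => z - w).tail).map
        fun p => Complex.arg (toC p.2 / toC p.1)).sum
      = Complex.arg (toC ((a :: l).getLast (List.cons_ne_nil _ _) - w)) - Complex.arg (toC (a - w))
        + 2 * Real.pi * (crossSum w (a :: l) : ℤ) := by
  induction l generalizing a with
  | nil => simp [crossSum]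
  | cons b l ih =>
    rw [List.isChain_cons_cons] at hc
    have := ih b hc.2 (fun h => hw (List.mem_cons_of_mem _ h))
    simp only [List.map_cons, List.tail_cons, List.zip_cons_cons, List.sum_cons] at this ⊢
    rw [this, arg_step, crossSum, cross_sub]
    · rw [List.getLast_cons (List.cons_ne_nil b l)]; push_cast; ring
    · intro h; apply hw; rw [sub_eq_zero.1 h]; simp
    · intro h; apply hw; rw [sub_eq_zero.1 h]; simp
    · obtain ⟨h1, h2, h3⟩ := hc.1
      refine ⟨fun h => h1 (sub_left_injective h), ?_, ?_⟩ <;> simpa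

lemma windingAround_loop (w a : Site) (M : List Site) (hc : (a :: M ++ [a]).IsChain adjStar)
    (hw : w ∉ a :: M) : windingAround (a :: M ++ [a]) w = crossSum w (a :: M ++ [a]) := by
  have := sum_arg w a (M ++ [a]) hc (by simp at hw ⊢; tauto)
  rw [windingAround, winding, List.cons_append, this]
  have hpi := Real.pi_pos.ne'
  simp
  field_simp

/-- Moving the reference site one step to the right, off a site the path avoids, does not change
the crossing number: only steps at the abandoned site could be counted differently. -/
lemma crossSum_right (x y : ℤ) (a : Site) (l : List Site)
    (h1 : (x, y) ∉ a :: l) :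
    crossSum (x + 1, y) (a :: l) = crossSum (x, y) (a :: l) := by
  induction l generalizing a with
  | nil => simp [crossSum]
  | cons b l ih =>
    simp only [crossSum]
    rw [ih b (fun h => h1 (List.mem_cons_of_mem _ h))]
    congr 1
    have ha : (x, y) ≠ a := fun h => h1 (by simp [h])
    have hb : (x, y) ≠ b := fun h => h1 (by simp [h])
    obtain ⟨a1, a2⟩ := a
    obtain ⟨b1, b2⟩ := b
    simp only [ne_eq, Prod.mk.injEq] at ha hb
    simp only [cross]
    split_ifs <;> omega

/-- The crossing numbers with respect to two vertically neighbouring sites off the path differ by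
the increment of the indicator of the ray along the path. -/
lemma crossSum_up (x y : ℤ) (a : Site) (l : List Site) (hc : (a :: l).IsChain adjStar)
    (h1 : (x, y) ∉ a :: l) (h2 : (x, y + 1) ∉ a :: l) :
    crossSum (x, y + 1) (a :: l) - crossSum (x, y) (a :: l)
      = (if ((a :: l).getLast (List.cons_ne_nil _ _)).2 = y ∧
            ((a :: l).getLast (List.cons_ne_nil _ _)).1 < x then 1 else 0)
        - (if a.2 = y ∧ a.1 < x then 1 else 0) := by
  induction l generalizing a with
  | nil => exact (sub_self _).symm
  | cons b l ih =>
    rw [List.isChain_cons_cons] at hc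
    have := ih b hc.2 (fun h => h1 (List.mem_cons_of_mem _ h))
      (fun h => h2 (List.mem_cons_of_mem _ h))
    simp only [crossSum]
    rw [List.getLast_cons (List.cons_ne_nil b l)]
    suffices hs : cross (x, y + 1) a b - cross (x, y) a b =
        (if b.2 = y ∧ b.1 < x then 1 else 0) - (if a.2 = y ∧ a.1 < x then 1 else 0) by
      linarith
    have ha : (x, y) ≠ a := fun h => h1 (by simp [h])
    have hb : (x, y) ≠ b := fun h => h1 (by simp [h])
    have ha' : (x, y + 1) ≠ a := fun h => h2 (by simp [h])
    have hb' : (x, y + 1) ≠ b := fun h => h2 (by simp [h])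
    obtain ⟨-, h3, h4⟩ := hc.1
    obtain ⟨a1, a2⟩ := a
    obtain ⟨b1, b2⟩ := b
    simp only [ne_eq, Prod.mk.injEq] at ha hb ha' hb'
    simp only [abs_le] at h3 h4
    simp only [cross]
    split_ifs <;> omega

/-- A loop off the square has the same crossing number around all sites of the square. -/
lemma crossSum_square (d : ℕ) (a : Site) (M : List Site)
    (hc : (a :: M ++ [a]).IsChain adjStar) (hd : ∀ z ∈ square d, z ∉ a :: M) (z : Site)
    (hz : z ∈ square d) : crossSum z (a :: M ++ [a]) = crossSum 0 (a :: M ++ [a]) := by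
  have hd' : ∀ x y : ℤ, |x| ≤ d → |y| ≤ d → (x, y) ∉ a :: (M ++ [a]) := fun x y hx hy => by
    have := hd (x, y) ⟨hx, hy⟩
    simp at this ⊢
    tauto
  have hH : ∀ y : ℤ, |y| ≤ d → ∀ x : ℤ, -(d : ℤ) ≤ x → x ≤ d →
      crossSum (x, y) (a :: (M ++ [a])) = crossSum (-(d : ℤ), y) (a :: (M ++ [a])) := by
    intro y hy x hx
    induction x, hx using Int.leInduction with
    | base => intro; rfl
    | succ n hn ih =>
      intro hnd
      rw [crossSum_right n y a (M ++ [a]) (hd' n y (abs_le.2 ⟨hn, by omega⟩) hy), ih (by omega)]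
  have hV : ∀ y : ℤ, -(d : ℤ) ≤ y → y ≤ d →
      crossSum (-(d : ℤ), y) (a :: (M ++ [a]))
        = crossSum (-(d : ℤ), -(d : ℤ)) (a :: (M ++ [a])) := by
    intro y hy
    induction y, hy using Int.leInduction with
    | base => intro; rfl
    | succ n hn ih =>
      intro hnd
      rw [← ih (by omega)]
      have := crossSum_up (-(d : ℤ)) n a (M ++ [a]) hc
        (hd' _ _ (by simp) (abs_le.2 ⟨hn, by omega⟩)) (hd' _ _ (by simp) (abs_le.2 ⟨by omega, hnd⟩))
      simp at this
      omega
  obtain ⟨x, y⟩ := z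
  obtain ⟨hx, hy⟩ := hz
  simp only at hx hy
  have hx' := abs_le.1 hx
  have hy' := abs_le.1 hy
  have h0 : (0 : Site) = (0, 0) := rfl
  rw [h0, List.cons_append, hH y hy x hx'.1 hx'.2, hV y hy'.1 hy'.2,
    hH 0 (by simp) 0 (by simp) (by simp), hV 0 (by simp) (by simp)]

/-! ### Self-avoiding loops -/

/-- A list with a repetition has two occurrences of some entry. -/
lemma exists_split_of_not_nodup (l : List Site) (h : ¬ l.Nodup) :
    ∃ X b Y Z, l = X ++ b :: Y ++ b :: Z := by
  induction l with
  | nil => simp at h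
  | cons a l ih =>
    by_cases ha : a ∈ l
    · obtain ⟨Y, Z, rfl⟩ := List.append_of_mem ha
      exact ⟨[], a, Y, Z, by simp⟩
    · rw [List.nodup_cons, not_and_or, not_not] at h
      obtain ⟨X, b, Y, Z, rfl⟩ := ih (h.resolve_left ha)
      exact ⟨a :: X, b, Y, Z, by simp⟩

/-- A loop of minimal length with non-zero crossing number is self-avoiding: otherwise cutting it
at a repeated site gives two shorter loops whose crossing numbers add up. -/
lemma exists_nodup_loop (R : Site → Site → Prop) (B : Set Site) (n : ℕ) :
    ∀ (a : Site) (M : List Site), M.length = n → (a :: M ++ [a]).IsChain R →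
      (∀ z ∈ a :: M, z ∈ B) → crossSum 0 (a :: M ++ [a]) ≠ 0 →
      ∃ (b : Site) (N : List Site), (b :: N ++ [b]).IsChain R ∧ (∀ z ∈ b :: N, z ∈ B) ∧
        crossSum 0 (b :: N ++ [b]) ≠ 0 ∧ (b :: N).Nodup := by
  induction n using Nat.strong_induction_on with
  | _ n ih =>
    intro a M hn hc hB hne
    by_cases hnd : (a :: M).Nodup
    · exact ⟨a, M, hc, hB, hne, hnd⟩
    obtain ⟨X, b, Y, Z, hl⟩ := exists_split_of_not_nodup _ hnd
    have hlen := congrArg List.length hl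
    simp only [List.length_append, List.length_cons] at hlen
    have e : a :: M ++ [a] = X ++ b :: (Y ++ b :: (Z ++ [a])) := by rw [hl]; simp
    rw [hl] at hB
    rw [e] at hc hne
    have hc1 := List.isChain_split.1 hc
    have hc2 : ((b :: Y) ++ [b]).IsChain R ∧ (b :: (Z ++ [a])).IsChain R :=
      List.isChain_split.1 hc1.2
    rw [crossSum_append, ← List.cons_append (a := b) (as := Y),
      crossSum_append 0 (b :: Y)] at hne
    by_cases h0 : crossSum 0 (b :: Y ++ [b]) = 0
    · have hne' : crossSum 0 (X ++ b :: (Z ++ [a])) ≠ 0 := by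
        rw [crossSum_append]; omega
      have hc3 : (X ++ b :: (Z ++ [a])).IsChain R := List.isChain_split.2 ⟨hc1.1, hc2.2⟩
      cases X with
      | nil =>
        have hab : a = b := by simpa using congrArg List.head? hl
        subst hab
        exact ih Z.length (by simp at hlen; omega) a Z rfl hc3
          (fun z hz => hB z (by simp at hz ⊢; tauto)) hne'
      | cons c X =>
        have hac : a = c := by simpa using congrArg List.head? hl
        subst hac
        have e2 : a :: X ++ b :: (Z ++ [a]) = a :: (X ++ b :: Z) ++ [a] := by simp
        rw [e2] at hc3 hne'
        exact ih (X ++ b :: Z).length (by simp at hlen ⊢; omega) a _ rfl hc3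
          (fun z hz => hB z (by simp at hz ⊢; tauto)) hne'
    · exact ih Y.length (by omega) b Y rfl hc2.1 (fun z hz => hB z (by simp at hz ⊢; tauto)) h0

/-! ### Potentials -/

/-- `Conn R B u v n`: some `R`-path inside `B` leads from `u` to `v` with crossing number `n`
(relative to the origin). -/
inductive Conn (R : Site → Site → Prop) (B : Set Site) (u : Site) : Site → ℤ → Prop
  | refl : Conn R B u u 0
  | step {v w : Site} {n : ℤ} : Conn R B u v n → R v w → v ∈ B → w ∈ B →
      Conn R B u w (n + cross 0 v w)

lemma cross_swap (w u v : Site) : cross w v u = -cross w u v := by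
  simp only [cross]
  split_ifs <;> omega

lemma Conn.trans {R : Site → Site → Prop} {B : Set Site} {u v w : Site} {m n : ℤ}
    (h1 : Conn R B u v m) (h2 : Conn R B v w n) : Conn R B u w (m + n) := by
  induction h2 with
  | refl => simpa using h1
  | step _ h hv hw ih => rw [← add_assoc]; exact ih.step h hv hw

lemma Conn.symm {R : Site → Site → Prop} (hR : ∀ u v, R u v → R v u) {B : Set Site} {u v : Site}
    {n : ℤ} (h : Conn R B u v n) : Conn R B v u (-n) := by
  induction h with
  | refl => simpa using Conn.refl
  | step _ h hv hw ih =>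
    rw [neg_add, add_comm, ← cross_swap]
    have := (Conn.refl (u := _)).step (hR _ _ h) hw hv
    rw [zero_add] at this
    exact this.trans ih

lemma Conn.exists_list {R : Site → Site → Prop} {B : Set Site} {u v : Site}
    {n : ℤ} (h : Conn R B u v n) :
    (v = u ∧ n = 0) ∨ ∃ M, (u :: M ++ [v]).IsChain R ∧ (∀ z ∈ u :: M, z ∈ B) ∧
      crossSum 0 (u :: M ++ [v]) = n := by
  induction h with
  | refl => simp
  | @step v w n _ h hv hw ih =>
    right
    rcases ih with ⟨rfl, rfl⟩ | ⟨M, h1, h2, h3⟩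
    · exact ⟨[], by simpa using h, by simpa using hv, by simp [crossSum]⟩
    · refine ⟨M ++ [v], ?_, ?_, ?_⟩
      · have e : u :: (M ++ [v]) ++ [w] = (u :: M) ++ v :: [w] := by simp
        rw [e, List.isChain_split]
        exact ⟨h1, by simpa using h⟩
      · intro z hz
        simp only [List.mem_cons, List.mem_append, List.not_mem_nil, or_false] at hz
        rcases hz with rfl | hz | rfl
        · exact h2 _ (by simp)
        · exact h2 _ (by simp [hz])
        · exact hv
      · have e : u :: (M ++ [v]) ++ [w] = (u :: M) ++ v :: [w] := by simp
        rw [e, crossSum_append, h3]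
        simp [crossSum]

/-- If no loop in `B` has a non-zero crossing number, crossings are the increments of a
potential on `B`. -/
lemma exists_potential (R : Site → Site → Prop) (hR : ∀ u v, R u v → R v u) (B : Set Site)
    (hno : ¬ ∃ (a : Site) (M : List Site), (a :: M ++ [a]).IsChain R ∧ (∀ z ∈ a :: M, z ∈ B) ∧
      crossSum 0 (a :: M ++ [a]) ≠ 0) :
    ∃ h : Site → ℤ, ∀ u ∈ B, ∀ v ∈ B, R u v → cross 0 u v = h v - h u := by
  classical
  have hloop : ∀ u n, Conn R B u u n → n = 0 := by
    intro u n hn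
    rcases hn.exists_list with h | ⟨M, h1, h2, h3⟩
    · exact h.2
    · by_contra hne
      exact hno ⟨u, M, h1, h2, by rwa [h3]⟩
  have huniq : ∀ u v m n, Conn R B u v m → Conn R B u v n → m = n := by
    intro u v m n hm hn
    have := hloop u _ (hm.trans (hn.symm hR))
    omega
  let comp : Site → Set Site := fun u => {v | ∃ n, Conn R B v u n}
  have hne : ∀ u, (comp u).Nonempty := fun u => ⟨u, 0, Conn.refl⟩
  -- the base point depends on the component only
  let rep : Set Site → Site := fun S => if h : S.Nonempty then h.choose else 0
  have hrep : ∀ u, ∃ n, Conn R B (rep (comp u)) u n := by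
    intro u
    have : rep (comp u) ∈ comp u := by
      simp only [rep, dif_pos (hne u)]
      exact (hne u).choose_spec
    exact this
  choose h hh using hrep
  refine ⟨h, fun u hu v hv huv => ?_⟩
  have hstep : Conn R B u v (cross 0 u v) := by
    simpa using (Conn.refl (u := u)).step huv hu hv
  have hcomp : comp u = comp v := by
    ext z
    constructor
    · rintro ⟨n, hn⟩; exact ⟨_, hn.trans hstep⟩
    · rintro ⟨n, hn⟩; exact ⟨_, hn.trans (hstep.symm hR)⟩
  have h1 := hh v
  rw [← hcomp] at h1
  have := huniq _ _ _ _ h1 ((hh u).trans hstep)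
  omega

/-! ### The discrete Stokes contradiction -/

/-- A finitely supported 1-cochain on the edges of the square lattice has total circulation `0`,
so its circulation cannot be a point mass. -/
lemma no_point_circulation (H V : Site → ℤ) (hH : H.support.Finite) (hV : V.support.Finite)
    (q : Site) (c : ℤ) (hc : c ≠ 0)
    (hcurl : ∀ p : Site, H p + V (p + (1, 0)) - H (p + (0, 1)) - V p = if p = q then c else 0) :
    False := by
  have hs : ∀ (f : Site → ℤ) (e : Site), f.support.Finite →
      (fun p => f (p + e)).support.Finite := by
    intro f e hf
    exact hf.preimage (f := fun p : Site => p + e) (add_left_injective e).injOn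
  have he : ∀ (f : Site → ℤ) (e : Site), ∑ᶠ p, f (p + e) = ∑ᶠ p, f p := fun f e =>
    finsum_comp_equiv (Equiv.addRight e) (f := f)
  have h1 : ∑ᶠ p : Site, ((H p - H (p + (0, 1))) - (V p - V (p + (1, 0)))) = 0 := by
    rw [finsum_sub_distrib, finsum_sub_distrib, finsum_sub_distrib, he, he]
    · ring
    · exact hV
    · exact hs V _ hV
    · exact hH
    · exact hs H _ hH
    · exact (hH.union (hs H (0, 1) hH)).subset (Function.support_sub _ _)
    · exact (hV.union (hs V (1, 0) hV)).subset (Function.support_sub _ _)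
  have h2 : ∑ᶠ p : Site, ((H p - H (p + (0, 1))) - (V p - V (p + (1, 0)))) = c := by
    rw [finsum_eq_single _ q]
    · have := hcurl q
      rw [if_pos rfl] at this
      omega
    · intro p hp
      have := hcurl p
      rw [if_neg hp] at this
      omega
  omega

lemma adj_symm (u v : Site) (h : adj u v) : adj v u := by
  unfold adj at *; linarith [sq_nonneg (u.1 - v.1), sub_sq_comm u.1 v.1, sub_sq_comm u.2 v.2]

lemma adjStar_symm (u v : Site) (h : adjStar u v) : adjStar v u := by
  obtain ⟨h1, h2, h3⟩ := h
  exact ⟨h1.symm, by rwa [abs_sub_comm], by rwa [abs_sub_comm]⟩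

/-- The cochain `cross - δh`, cut off to the edges touching `A`. -/
noncomputable def cutoff (A : Set Site) (h : Site → ℤ) (u v : Site) : ℤ :=
  open Classical in if u ∈ A ∨ v ∈ A then cross 0 u v - (h v - h u) else 0

lemma cutoff_support (A : Set Site) (hA : A.Finite) (h : Site → ℤ) (e : Site) :
    (fun p => cutoff A h p (p + e)).support.Finite := by
  refine (hA.union (hA.preimage (f := fun p : Site => p + e)
    (add_left_injective e).injOn)).subset ?_
  intro p hp
  by_contra hcon
  simp only [Set.mem_union, Set.mem_preimage] at hcon
  exact hp (by simp [cutoff, hcon])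

/-- The circulation of `cross 0` is concentrated on the plaquette whose upper right corner is the
origin. If the cutoff has the same circulation, finiteness of `A` gives a contradiction. -/
lemma no_cutoff (A : Set Site) (hA : A.Finite) (h : Site → ℤ)
    (hcurl : ∀ x y : ℤ, cutoff A h (x, y) (x + 1, y) + cutoff A h (x + 1, y) (x + 1, y + 1)
      - cutoff A h (x, y + 1) (x + 1, y + 1) - cutoff A h (x, y) (x, y + 1)
      = if x = -1 ∧ y = -1 then 1 else 0) : False := by
  refine no_point_circulation (fun p => cutoff A h p (p + (1, 0)))
    (fun p => cutoff A h p (p + (0, 1))) (cutoff_support A hA h _) (cutoff_support A hA h _)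
    (-1, -1) 1 (by norm_num) ?_
  rintro ⟨x, y⟩
  simpa using hcurl x y

lemma cross_horizontal (x y : ℤ) : cross 0 (x, y) (x + 1, y) = 0 := by
  simp [cross]; omega

lemma cross_vertical (x y : ℤ) :
    cross 0 (x, y) (x, y + 1) = if y = -1 ∧ x < 0 then -1 else 0 := by
  simp only [cross, Prod.fst_zero, Prod.snd_zero]; split_ifs <;> omega

lemma cross_diag (x y : ℤ) :
    cross 0 (x, y) (x + 1, y + 1) = if y = -1 ∧ x + 1 < 0 then -1 else 0 := by
  simp only [cross, Prod.fst_zero, Prod.snd_zero]; split_ifs <;> omega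

lemma cross_antidiag (x y : ℤ) :
    cross 0 (x + 1, y) (x, y + 1) = if y = -1 ∧ x < 0 then -1 else 0 := by
  simp only [cross, Prod.fst_zero, Prod.snd_zero]; split_ifs <;> omega

lemma adj_right (x y : ℤ) : adj (x, y) (x + 1, y) := by simp [adj]
lemma adj_up (x y : ℤ) : adj (x, y) (x, y + 1) := by simp [adj]
lemma adjStar_right (x y : ℤ) : adjStar (x, y) (x + 1, y) := by simp [adjStar]
lemma adjStar_up (x y : ℤ) : adjStar (x, y) (x, y + 1) := by simp [adjStar]
lemma adjStar_diag (x y : ℤ) : adjStar (x, y) (x + 1, y + 1) := by simp [adjStar]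
lemma adjStar_antidiag (x y : ℤ) : adjStar (x + 1, y) (x, y + 1) := by simp [adjStar]

/-- On every plaquette touching `A`, all four corners lie in `A ∪ B`; hence the cutoff does not
change the circulation there. -/
lemma no_potential_adj (A B : Set Site) (hA : A.Finite) (h0 : (0 : Site) ∈ A)
    (hAB : ∀ a ∈ A, ∀ u, adjStar a u → u ∉ A → u ∈ B) (h : Site → ℤ)
    (hh : ∀ u ∈ B, ∀ v ∈ B, adj u v → cross 0 u v = h v - h u) : False := by
  refine no_cutoff A hA h fun x y => ?_
  have hAB' : ∀ u a, adjStar u a → a ∈ A → u ∉ A → u ∈ B := fun u a hua ha hu =>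
    hAB a ha u (adjStar_symm _ _ hua) hu
  have r1 := adjStar_right x y
  have r2 := adjStar_right x (y + 1)
  have u1 := adjStar_up x y
  have u2 := adjStar_up (x + 1) y
  have d1 := adjStar_diag x y
  have d2 := adjStar_antidiag x y
  have c1 := cross_horizontal x y
  have c2 := cross_horizontal x (y + 1)
  have c3 := cross_vertical x y
  have c4 := cross_vertical (x + 1) y
  have k : (x = -1 ∧ y = -1) → (x + 1, y + 1) ∈ A := by
    rintro ⟨rfl, rfl⟩; exact h0
  have e1 := fun p q => hh _ p _ q (adj_right x y)
  have e2 := fun p q => hh _ p _ q (adj_right x (y + 1))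
  have e3 := fun p q => hh _ p _ q (adj_up x y)
  have e4 := fun p q => hh _ p _ q (adj_up (x + 1) y)
  by_cases hT : (x, y) ∈ A ∨ (x + 1, y) ∈ A ∨ (x, y + 1) ∈ A ∨ (x + 1, y + 1) ∈ A
  · have hP : cutoff A h (x, y) (x + 1, y) + cutoff A h (x + 1, y) (x + 1, y + 1)
        - cutoff A h (x, y + 1) (x + 1, y + 1) - cutoff A h (x, y) (x, y + 1) =
        cross 0 (x, y) (x + 1, y) + cross 0 (x + 1, y) (x + 1, y + 1)
        - cross 0 (x, y + 1) (x + 1, y + 1) - cross 0 (x, y) (x, y + 1) := by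
      clear k c1 c2 c3 c4
      unfold cutoff
      grind
    rw [hP, c1, c2, c3, c4]
    split_ifs <;> omega
  · rw [if_neg fun hxy => hT (by simp [k hxy])]
    simp only [not_or] at hT
    simp [cutoff, hT]

/-- If only one corner of a plaquette lies in `A`, its two neighbours lie in `B`, and the diagonal
joining them takes the place of the two sides through the opposite corner. -/
lemma no_potential_adjStar (A B : Set Site) (hA : A.Finite) (h0 : (0 : Site) ∈ A)
    (hAB : ∀ a ∈ A, ∀ u, adj a u → u ∉ A → u ∈ B) (h : Site → ℤ)
    (hh : ∀ u ∈ B, ∀ v ∈ B, adjStar u v → cross 0 u v = h v - h u) : False := by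
  refine no_cutoff A hA h fun x y => ?_
  have hAB' : ∀ u a, adj u a → a ∈ A → u ∉ A → u ∈ B := fun u a hua ha hu =>
    hAB a ha u (adj_symm _ _ hua) hu
  have c1 := cross_horizontal x y
  have c2 := cross_horizontal x (y + 1)
  have c3 := cross_vertical x y
  have c4 := cross_vertical (x + 1) y
  have c5 := cross_diag x y
  have c6 := cross_antidiag x y
  have k : (x = -1 ∧ y = -1) → (x + 1, y + 1) ∈ A := by
    rintro ⟨rfl, rfl⟩; exact h0
  have e1 := fun p q => hh _ p _ q (adjStar_right x y)
  have e2 := fun p q => hh _ p _ q (adjStar_right x (y + 1))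
  have e3 := fun p q => hh _ p _ q (adjStar_up x y)
  have e4 := fun p q => hh _ p _ q (adjStar_up (x + 1) y)
  have e5 := fun p q => hh _ p _ q (adjStar_diag x y)
  have e6 := fun p q => hh _ p _ q (adjStar_antidiag x y)
  have b1 := fun p q => hAB _ p _ (adj_right x y) q
  have b2 := fun p q => hAB _ p _ (adj_right x (y + 1)) q
  have b3 := fun p q => hAB _ p _ (adj_up x y) q
  have b4 := fun p q => hAB _ p _ (adj_up (x + 1) y) q
  have b1' := fun p q => hAB' _ _ (adj_right x y) p q
  have b2' := fun p q => hAB' _ _ (adj_right x (y + 1)) p q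
  have b3' := fun p q => hAB' _ _ (adj_up x y) p q
  have b4' := fun p q => hAB' _ _ (adj_up (x + 1) y) p q
  clear hAB hAB' hh
  rw [c1] at e1
  rw [c2] at e2
  rw [c3] at e3
  rw [c4] at e4
  rw [c5] at e5
  rw [c6] at e6
  unfold cutoff
  rw [c1, c2, c3, c4]
  clear c1 c2 c3 c4 c5 c6
  by_cases m1 : (x, y) ∈ A <;> by_cases m2 : (x + 1, y) ∈ A <;>
    by_cases m3 : (x, y + 1) ∈ A <;> by_cases m4 : (x + 1, y + 1) ∈ A <;>
    simp only [m1, m2, m3, m4, not_true_eq_false, not_false_eq_true, true_implies, false_implies,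
      or_true, true_or, or_self, if_true, if_false, imp_false, implies_true, not_and] at * <;>
    grind

/-! ### Clusters -/

/-- If all clusters meeting the boundary of the square are finite, their union with the square is a
finite set, and its neighbours outside carry the opposite spin. Here `R` is `adj` or
`adjStar` and `b` is the spin of the clusters. -/
lemma exists_finite_hull (R : Site → Site → Prop) (hR : ∀ u v, R u v → R v u)
    (hRs : ∀ u v, R u v → adjStar u v) (b : Bool) (d : ℕ) (σ : Config)
    (hfin : ∀ S : Set Site, (S.Nonempty ∧ (∀ z ∈ S, σ z = b) ∧
      (∀ x ∈ S, ∀ y ∈ S, JoinedIn R S x y) ∧ (∀ x ∈ S, ∀ y : Site, R x y → σ y = b → y ∈ S)) →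
      (S ∩ starBoundary (square d)).Nonempty → S.Finite) :
    ∃ A : Set Site, A.Finite ∧ square d ⊆ A ∧ ∀ a ∈ A, ∀ u, R a u → u ∉ A → σ u = !b := by
  let r : Site → Site → Prop := fun u v => R u v ∧ σ u = b ∧ σ v = b
  have hr : Std.Symm r := ⟨fun u v h => ⟨hR _ _ h.1, h.2.2, h.2.1⟩⟩
  let S : Site → Set Site := fun x => {y | Relation.ReflTransGen r x y}
  have hspin : ∀ x, σ x = b → ∀ z ∈ S x, σ z = b := by
    intro x hx z hz
    rcases Relation.ReflTransGen.cases_tail hz with h | ⟨c, -, h⟩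
    · rw [h]; exact hx
    · exact h.2.2
  have hjoin : ∀ w x y, w ∈ S x → Relation.ReflTransGen r w y → JoinedIn R (S x) w y := by
    intro w x y hw h
    induction h using Relation.ReflTransGen.head_induction_on with
    | refl => exact ⟨[y], by simp [List.Chain'], by simpa using hw, by simp, by simp⟩
    | @head a c hac _ ih =>
      obtain ⟨P, h1, h2, h3, h4⟩ := ih (Relation.ReflTransGen.tail hw hac)
      cases P with
      | nil => simp at h3
      | cons e P =>
        obtain rfl : e = c := by simpa using h3
        refine ⟨a :: e :: P, ?_, ?_, by simp, by simpa using h4⟩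
        · exact List.isChain_cons_cons.2 ⟨hac.1, h1⟩
        · intro z hz
          rcases List.mem_cons.1 hz with rfl | hz
          · exact hw
          · exact h2 z hz
  have hsq : (square d).Finite := by
    refine (Set.finite_Icc ((-(d : ℤ), -(d : ℤ)) : Site) (d, d)).subset ?_
    rintro ⟨x, y⟩ ⟨h1, h2⟩
    rw [abs_le] at h1 h2
    exact ⟨⟨h1.1, h2.1⟩, ⟨h1.2, h2.2⟩⟩
  have hbd : (starBoundary (square d)).Finite := by
    refine (Set.finite_Icc ((-(d : ℤ) - 1, -(d : ℤ) - 1) : Site) (d + 1, d + 1)).subset ?_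
    rintro ⟨x, y⟩ ⟨-, ⟨x', y'⟩, ⟨h1, h2⟩, -, h3, h4⟩
    simp only [abs_le] at h1 h2 h3 h4
    exact ⟨⟨by simp only; omega, by simp only; omega⟩, ⟨by simp only; omega, by simp only; omega⟩⟩
  refine ⟨square d ∪ ⋃ x ∈ {x ∈ starBoundary (square d) | σ x = b}, S x, ?_,
    Set.subset_union_left, ?_⟩
  · refine hsq.union ((hbd.subset (Set.sep_subset _ _)).biUnion ?_)
    rintro x ⟨hx, hxb⟩
    refine hfin (S x) ⟨⟨x, Relation.ReflTransGen.refl⟩, hspin x hxb, ?_, ?_⟩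
      ⟨x, Relation.ReflTransGen.refl, hx⟩
    · intro u hu v hv
      exact hjoin u x v hu ((Std.Symm.symm (r := Relation.ReflTransGen r) _ _ hu).trans hv)
    · intro u hu v huv hv
      exact Relation.ReflTransGen.tail hu ⟨huv, hspin x hxb u hu, hv⟩
  · intro a ha u hau hu
    by_contra hcon
    have hub : σ u = b := by
      cases b <;> simpa using hcon
    apply hu
    right
    simp only [Set.mem_iUnion]
    rcases ha with ha | ha
    · exact ⟨u, ⟨⟨fun h => hu (Or.inl h), a, ha, adjStar_symm _ _ (hRs _ _ hau)⟩, hub⟩,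
        Relation.ReflTransGen.refl⟩
    · simp only [Set.mem_iUnion] at ha
      obtain ⟨x, hx, hax⟩ := ha
      exact ⟨x, hx, Relation.ReflTransGen.tail hax ⟨hau, hspin x hx.2 a hax, hub⟩⟩

/-- If crossings have no potential on a set off the square, the set contains a self-avoiding
circuit around the square. -/
lemma exists_circuit (R : Site → Site → Prop) (hR : ∀ u v, R u v → R v u)
    (hRs : ∀ u v, R u v → adjStar u v) (d : ℕ) (B : Set Site) (hB : Disjoint (square d) B)
    (hno : ¬ ∃ h : Site → ℤ, ∀ u ∈ B, ∀ v ∈ B, R u v → cross 0 u v = h v - h u) :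
    ∃ C : List Site, (C.Chain' R ∧ ∃ h : C ≠ [], R (C.getLast h) (C.head h)) ∧
      (∀ z ∈ C, z ∈ B) ∧ C.Nodup ∧ CircuitAround C (square d) := by
  by_cases hloop : ∃ (a : Site) (M : List Site), (a :: M ++ [a]).IsChain R ∧
      (∀ z ∈ a :: M, z ∈ B) ∧ crossSum 0 (a :: M ++ [a]) ≠ 0
  · obtain ⟨a, M, h1, h2, h3⟩ := hloop
    obtain ⟨a, M, h1, h2, h3, h4⟩ := exists_nodup_loop R B _ a M rfl h1 h2 h3
    have h1' := List.isChain_append.1 h1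
    have hoff : ∀ z ∈ square d, z ∉ a :: M := fun z hz hzC =>
      Set.disjoint_left.1 hB hz (h2 z hzC)
    have hs : (a :: M ++ [a]).IsChain adjStar := h1.imp hRs
    refine ⟨a :: M, ⟨h1'.1, by simp, ?_⟩, h2, h4, fun z hz => ⟨hoff z hz, ?_⟩⟩
    · exact h1'.2.2 _ (List.getLast?_eq_some_getLast (by simp)) _ (by simp)
    · have e : (a :: M).take 1 = [a] := by simp
      rw [e, windingAround_loop z a M hs (hoff z hz), crossSum_square d a M hs hoff z hz]
      exact_mod_cast h3
  · exact absurd (exists_potential R hR B hloop) hno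

lemma adj.star (u v : Site) (h : adj u v) : adjStar u v := by
  unfold adj at h
  refine ⟨?_, abs_le_one_iff_mul_self_le_one.2 (by nlinarith [sq_nonneg (u.2 - v.2)]),
    abs_le_one_iff_mul_self_le_one.2 (by nlinarith [sq_nonneg (u.1 - v.1)])⟩
  rintro rfl
  simp at h

lemma zero_mem_square (d : ℕ) : (0 : Site) ∈ square d := by simp [square]

/-- If all `1*`clusters meeting `∂*Δ` are finite (with `Δ = {-d,…,d}²`), then there is a
self-avoiding `0`circuit around `Δ`; dually with the roles of `0` and `1*` exchanged. -/
theorem statement11 (d : ℕ) (σ : Config) :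
    ((∀ S : Set Site, IsCluster1 σ S → (S ∩ starBoundary (square d)).Nonempty → S.Finite) →
      ∃ C : List Site, Is0Circuit σ C ∧ C.Nodup ∧ CircuitAround C (square d)) ∧
    ((∀ S : Set Site, IsCluster0 σ S → (S ∩ starBoundary (square d)).Nonempty → S.Finite) →
      ∃ C : List Site, Is1StarCircuit σ C ∧ C.Nodup ∧ CircuitAround C (square d)) := by
  constructor
  · intro hfin
    obtain ⟨A, hA, hsq, hAu⟩ :=
      exists_finite_hull adjStar adjStar_symm (fun _ _ h => h) true d σ hfin
    obtain ⟨C, h1, h2, h3, h4⟩ := exists_circuit adj adj_symm adj.star d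
      {z | z ∉ A ∧ σ z = false} (Set.disjoint_left.2 fun z hz hzB => hzB.1 (hsq hz)) (by
        rintro ⟨h, hh⟩
        exact no_potential_adj A {z | z ∉ A ∧ σ z = false} hA (hsq (zero_mem_square d))
          (fun a ha u hau hu => ⟨hu, hAu a ha u hau hu⟩) h hh)
    exact ⟨C, ⟨h1, fun z hz => (h2 z hz).2⟩, h3, h4⟩
  · intro hfin
    obtain ⟨A, hA, hsq, hAu⟩ := exists_finite_hull adj adj_symm adj.star false d σ hfin
    obtain ⟨C, h1, h2, h3, h4⟩ := exists_circuit adjStar adjStar_symm (fun _ _ h => h) d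
      {z | z ∉ A ∧ σ z = true} (Set.disjoint_left.2 fun z hz hzB => hzB.1 (hsq hz)) (by
        rintro ⟨h, hh⟩
        exact no_potential_adjStar A {z | z ∉ A ∧ σ z = true} hA (hsq (zero_mem_square d))
          (fun a ha u hau hu => ⟨hu, hAu a ha u hau hu⟩) h hh)
    exact ⟨C, ⟨h1, fun z hz => (h2 z hz).2⟩, h3, h4⟩

end Percolation
end
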